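/- arXiv:0804.0274 — 7 statements merged into one kernel-verified Lean document; each statement's English description precedes it below -/
import Mathlib

section
/- Let τ_A and τ be twice continuously differentiable complex-valued functions of (x,y) on an open subset Ω of ℂ², let p, E ∈ ℂ, and on the set where τ ≠ 0 define u := −2(τ_{xx}τ − τ_x²)/τ² (i.e., u = −2∂_x² ln τ) and ψ := (τ_A/τ)e^{px+Ey}. Then at every point of Ω where τ ≠ 0 one has e^{−px−Ey} τ² (∂_yψ − ∂_x²ψ + uψ) = ((D_y+E)−(D_x+p)²)τ_A·τ. In particular, on any open subset where τ is nowhere zero, ψ satisfies the auxiliary linear equation (∂_y − ∂_x² + u)ψ = 0 if and only if the Hirota bilinear equation ((D_y+E)−(D_x+p)²)τ_A·τ = 0 holds there. -/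
/-- Partial derivative in the first (x) variable of a function on ℂ². -/
noncomputable def pdx (f : ℂ × ℂ → ℂ) : ℂ × ℂ → ℂ :=
  fun q => deriv (fun x => f (x, q.2)) q.1

/-- Partial derivative in the second (y) variable of a function on ℂ². -/
noncomputable def pdy (f : ℂ × ℂ → ℂ) : ℂ × ℂ → ℂ :=
  fun q => deriv (fun y => f (q.1, y)) q.2

/-- Hirota bilinear operator `D_x f·g = f_x g − f g_x`. -/
noncomputable def Dx (f g : ℂ × ℂ → ℂ) : ℂ × ℂ → ℂ :=
  fun q => pdx f q * g q - f q * pdx g q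

/-- Hirota bilinear operator `D_y f·g = f_y g − f g_y`. -/
noncomputable def Dy (f g : ℂ × ℂ → ℂ) : ℂ × ℂ → ℂ :=
  fun q => pdy f q * g q - f q * pdy g q

/-- Hirota bilinear operator `D_x² f·g = f_xx g − 2 f_x g_x + f g_xx`. -/
noncomputable def Dx2 (f g : ℂ × ℂ → ℂ) : ℂ × ℂ → ℂ :=
  fun q => pdx (pdx f) q * g q - 2 * pdx f q * pdx g q + f q * pdx (pdx g) q

/-- The Hirota bilinear operator `((D_y+E)−(D_x+p)²) f·g
  = D_y f·g + E f g − D_x² f·g − 2p D_x f·g − p² f g`. -/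
noncomputable def HirotaL (p E : ℂ) (f g : ℂ × ℂ → ℂ) : ℂ × ℂ → ℂ :=
  fun q => Dy f g q + E * f q * g q - Dx2 f g q - 2 * p * Dx f g q - p ^ 2 * f q * g q

/-- The potential `u = −2 ∂_x² ln τ = −2(τ_xx τ − τ_x²)/τ²`. -/
noncomputable def uOf (τ : ℂ × ℂ → ℂ) : ℂ × ℂ → ℂ :=
  fun q => -2 * (pdx (pdx τ) q * τ q - (pdx τ q) ^ 2) / (τ q) ^ 2

/-- The wave function `ψ = (τ_A/τ) e^{px+Ey}`. -/
noncomputable def psiOf (p E : ℂ) (τA τ : ℂ × ℂ → ℂ) : ℂ × ℂ → ℂ :=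
  fun q => (τA q / τ q) * Complex.exp (p * q.1 + E * q.2)

/-!
Two classical facts about Hirota derivatives. First, a plane wave `w = e^{px+Ey}` intertwines the
shifted operator with the unshifted one, `(D_y − D_x²) (w f)·g = w ((D_y+E) − (D_x+p)²) f·g`.
Second, `D_y (ψτ)·τ = τ² ψ_y` and `D_x² (ψτ)·τ = τ² ψ_xx + ψ D_x² τ·τ`, where
`D_x² τ·τ = −τ² u`, so that `(D_y − D_x²) (ψτ)·τ = τ² (ψ_y − ψ_xx + uψ)`. Since `ψτ = w τ_A`
near every point with `τ ≠ 0`, the two right-hand sides agree.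
-/

open Filter Topology

theorem deriv_deriv_mul {𝕜 𝔸 : Type*} [NontriviallyNormedField 𝕜] [NormedRing 𝔸]
    [NormedAlgebra 𝕜 𝔸] {f g : 𝕜 → 𝔸} {x : 𝕜} (hf : ContDiffAt 𝕜 2 f x)
    (hg : ContDiffAt 𝕜 2 g x) :
    deriv (deriv (f * g)) x =
      deriv (deriv f) x * g x + 2 * (deriv f x * deriv g x) + f x * deriv (deriv g) x := by
  have leibniz := iteratedDeriv_mul hf hg
  simp only [iteratedDeriv_eq_iterate] at leibniz
  simpa [Finset.sum_range_succ, mul_assoc, add_comm, add_left_comm] using leibniz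

section PartialDerivatives

variable {f g : ℂ × ℂ → ℂ} {q : ℂ × ℂ}

theorem pdx_congr (h : f =ᶠ[𝓝 q] g) : pdx f q = pdx g q :=
  (h.comp_tendsto (Continuous.prodMk_left q.2).continuousAt).deriv_eq

theorem pdx_pdx_congr (h : f =ᶠ[𝓝 q] g) : pdx (pdx f) q = pdx (pdx g) q :=
  (h.comp_tendsto (Continuous.prodMk_left q.2).continuousAt).deriv.deriv_eq

theorem pdy_congr (h : f =ᶠ[𝓝 q] g) : pdy f q = pdy g q :=
  (h.comp_tendsto (Continuous.prodMk_right q.1).continuousAt).deriv_eq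

theorem pdx_mul (hf : DifferentiableAt ℂ f q) (hg : DifferentiableAt ℂ g q) :
    pdx (f * g) q = pdx f q * g q + f q * pdx g q :=
  have hslice : DifferentiableAt ℂ (fun x : ℂ => (x, q.2)) q.1 := by fun_prop
  deriv_fun_mul (hf.comp q.1 hslice) (hg.comp q.1 hslice)

theorem pdy_mul (hf : DifferentiableAt ℂ f q) (hg : DifferentiableAt ℂ g q) :
    pdy (f * g) q = pdy f q * g q + f q * pdy g q :=
  have hslice : DifferentiableAt ℂ (fun y : ℂ => (q.1, y)) q.2 := by fun_prop
  deriv_fun_mul (hf.comp q.2 hslice) (hg.comp q.2 hslice)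

theorem pdx_pdx_mul (hf : ContDiffAt ℂ 2 f q) (hg : ContDiffAt ℂ 2 g q) :
    pdx (pdx (f * g)) q =
      pdx (pdx f) q * g q + 2 * (pdx f q * pdx g q) + f q * pdx (pdx g) q :=
  have hslice : ContDiffAt ℂ 2 (fun x : ℂ => (x, q.2)) q.1 := by fun_prop
  deriv_deriv_mul (hf.comp q.1 hslice) (hg.comp q.1 hslice)

theorem pdx_const_smul (c : ℂ) (f : ℂ × ℂ → ℂ) : pdx (c • f) = c • pdx f :=
  funext fun _ => deriv_const_mul_field c

end PartialDerivatives

/-- The plane wave `e^{px+Ey}`, the exponential factor of the wave function `psiOf p E τA τ`. -/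
noncomputable def planeWave (p E : ℂ) : ℂ × ℂ → ℂ :=
  fun q => Complex.exp (p * q.1 + E * q.2)

section PlaneWave

variable (p E : ℂ)

theorem planeWave_ne_zero (q : ℂ × ℂ) : planeWave p E q ≠ 0 :=
  Complex.exp_ne_zero _

theorem contDiff_planeWave {n : WithTop ℕ∞} : ContDiff ℂ n (planeWave p E) := by
  unfold planeWave
  fun_prop

theorem pdx_planeWave : pdx (planeWave p E) = p • planeWave p E := by
  funext q
  have hphase : HasDerivAt (fun x => p * x + E * q.2) p q.1 := by
    simpa using ((hasDerivAt_id q.1).const_mul p).add_const (E * q.2)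
  exact hphase.cexp.deriv.trans (mul_comm _ _)

theorem pdy_planeWave : pdy (planeWave p E) = E • planeWave p E := by
  funext q
  have hphase : HasDerivAt (fun y => p * q.1 + E * y) E q.2 := by
    simpa using ((hasDerivAt_id q.2).const_mul E).const_add (p * q.1)
  exact hphase.cexp.deriv.trans (mul_comm _ _)

end PlaneWave

section Hirota

variable {f g τ ψ : ℂ × ℂ → ℂ} {q : ℂ × ℂ}

theorem HirotaL_zero_zero (f g : ℂ × ℂ → ℂ) (q : ℂ × ℂ) :
    HirotaL 0 0 f g q = Dy f g q - Dx2 f g q := by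
  simp [HirotaL]

theorem HirotaL_congr_left {f₁ f₂ : ℂ × ℂ → ℂ} (p E : ℂ) (h : f₁ =ᶠ[𝓝 q] f₂) :
    HirotaL p E f₁ g q = HirotaL p E f₂ g q := by
  simp only [HirotaL, Dx, Dy, Dx2, pdx_congr h, pdx_pdx_congr h, pdy_congr h, h.eq_of_nhds]

theorem HirotaL_planeWave_mul_left (p E : ℂ) (hf : ContDiffAt ℂ 2 f q) :
    HirotaL 0 0 (planeWave p E * f) g q = planeWave p E q * HirotaL p E f g q := by
  have hw : ContDiffAt ℂ 2 (planeWave p E) q := (contDiff_planeWave p E).contDiffAt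
  have hf' := hf.differentiableAt two_ne_zero
  have hw' := hw.differentiableAt two_ne_zero
  rw [HirotaL_zero_zero]
  simp only [HirotaL, Dy, Dx2, Dx, pdy_mul hw' hf', pdx_mul hw' hf', pdx_pdx_mul hw hf,
    pdx_planeWave, pdx_const_smul, pdy_planeWave, Pi.mul_apply, Pi.smul_apply, smul_eq_mul]
  ring

theorem Dy_mul_self_right (hf : DifferentiableAt ℂ f q) (hg : DifferentiableAt ℂ g q) :
    Dy (f * g) g q = g q ^ 2 * pdy f q := by
  simp only [Dy, pdy_mul hf hg, Pi.mul_apply]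
  ring

theorem Dx2_mul_self_right (hf : ContDiffAt ℂ 2 f q) (hg : ContDiffAt ℂ 2 g q) :
    Dx2 (f * g) g q = g q ^ 2 * pdx (pdx f) q + f q * Dx2 g g q := by
  have hx := pdx_mul (hf.differentiableAt two_ne_zero) (hg.differentiableAt two_ne_zero)
  simp only [Dx2, hx, pdx_pdx_mul hf hg, Pi.mul_apply]
  ring

theorem Dx2_self_eq_neg_sq_mul_uOf (h0 : τ q ≠ 0) : Dx2 τ τ q = -(τ q ^ 2 * uOf τ q) := by
  simp only [Dx2, uOf]
  field_simp
  ring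

theorem HirotaL_zero_zero_mul_self_right (hψ : ContDiffAt ℂ 2 ψ q) (hτ : ContDiffAt ℂ 2 τ q)
    (h0 : τ q ≠ 0) :
    HirotaL 0 0 (ψ * τ) τ q = τ q ^ 2 * (pdy ψ q - pdx (pdx ψ) q + uOf τ q * ψ q) := by
  rw [HirotaL_zero_zero,
    Dy_mul_self_right (hψ.differentiableAt two_ne_zero) (hτ.differentiableAt two_ne_zero),
    Dx2_mul_self_right hψ hτ, Dx2_self_eq_neg_sq_mul_uOf h0]
  ring

end Hirota

section WaveFunction

variable {τA τ : ℂ × ℂ → ℂ} {q : ℂ × ℂ} (p E : ℂ)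

theorem contDiffAt_psiOf {n : WithTop ℕ∞} (hτA : ContDiffAt ℂ n τA q) (hτ : ContDiffAt ℂ n τ q)
    (h0 : τ q ≠ 0) : ContDiffAt ℂ n (psiOf p E τA τ) q :=
  (hτA.div hτ h0).mul (contDiff_planeWave p E).contDiffAt

theorem psiOf_mul_eventuallyEq (hτ : ContinuousAt τ q) (h0 : τ q ≠ 0) :
    psiOf p E τA τ * τ =ᶠ[𝓝 q] planeWave p E * τA := by
  filter_upwards [hτ.eventually_ne h0] with z hz
  simp only [psiOf, planeWave, Pi.mul_apply]
  field_simp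

theorem sq_mul_psiOf_eq_planeWave_mul_HirotaL (hτA : ContDiffAt ℂ 2 τA q)
    (hτ : ContDiffAt ℂ 2 τ q) (h0 : τ q ≠ 0) :
    τ q ^ 2 * (pdy (psiOf p E τA τ) q - pdx (pdx (psiOf p E τA τ)) q
        + uOf τ q * psiOf p E τA τ q)
      = planeWave p E q * HirotaL p E τA τ q :=
  calc
    _ = HirotaL 0 0 (psiOf p E τA τ * τ) τ q :=
      (HirotaL_zero_zero_mul_self_right (contDiffAt_psiOf p E hτA hτ h0) hτ h0).symm
    _ = HirotaL 0 0 (planeWave p E * τA) τ q :=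
      HirotaL_congr_left 0 0 (psiOf_mul_eventuallyEq p E hτ.continuousAt h0)
    _ = planeWave p E q * HirotaL p E τA τ q := HirotaL_planeWave_mul_left p E hτA

end WaveFunction

/-- `e^{−px−Ey} τ² (∂_yψ − ∂_x²ψ + uψ) = ((D_y+E)−(D_x+p)²)τ_A·τ`
wherever τ ≠ 0; in particular, on open subsets where τ is nowhere zero, the
auxiliary linear equation for ψ is equivalent to the Hirota bilinear equation. -/
theorem stmt_2 (Ω : Set (ℂ × ℂ)) (hΩ : IsOpen Ω)
    (τA τ : ℂ × ℂ → ℂ)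
    (hτA : ContDiffOn ℂ 2 τA Ω) (hτ : ContDiffOn ℂ 2 τ Ω)
    (p E : ℂ) :
    (∀ q ∈ Ω, τ q ≠ 0 →
      Complex.exp (-(p * q.1) - E * q.2) * (τ q) ^ 2 *
          (pdy (psiOf p E τA τ) q - pdx (pdx (psiOf p E τA τ)) q
            + uOf τ q * psiOf p E τA τ q)
        = HirotaL p E τA τ q) ∧
    (∀ Ω' : Set (ℂ × ℂ), IsOpen Ω' → Ω' ⊆ Ω → (∀ q ∈ Ω', τ q ≠ 0) →
      ((∀ q ∈ Ω',
          pdy (psiOf p E τA τ) q - pdx (pdx (psiOf p E τA τ)) q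
            + uOf τ q * psiOf p E τA τ q = 0)
        ↔ (∀ q ∈ Ω', HirotaL p E τA τ q = 0))) := by
  have key : ∀ q ∈ Ω, τ q ≠ 0 →
      τ q ^ 2 * (pdy (psiOf p E τA τ) q - pdx (pdx (psiOf p E τA τ)) q
          + uOf τ q * psiOf p E τA τ q)
        = planeWave p E q * HirotaL p E τA τ q := fun q hq h0 =>
    sq_mul_psiOf_eq_planeWave_mul_HirotaL p E (hτA.contDiffAt (hΩ.mem_nhds hq))
      (hτ.contDiffAt (hΩ.mem_nhds hq)) h0
  refine ⟨fun q hq h0 => ?_, fun Ω' _ hsub hne => forall₂_congr fun q hq => ?_⟩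
  · have hexp : Complex.exp (-(p * q.1) - E * q.2) = (planeWave p E q)⁻¹ := by
      rw [planeWave, ← Complex.exp_neg, neg_add']
    rw [mul_assoc, key q hq h0, hexp, inv_mul_cancel_left₀ (planeWave_ne_zero p E q)]
  · rw [← mul_eq_zero_iff_left (pow_ne_zero 2 (hne q hq)), key q (hsub hq) (hne q hq),
      mul_eq_zero_iff_left (planeWave_ne_zero p E q)]
end

section
/- Let D ⊆ ℂ be open, x₀ : D → ℂ holomorphic, y₀ ∈ D, and let φ, φ_A be holomorphic functions on a neighborhood of the point (x₀(y₀), y₀) in ℂ² with φ(x₀(y₀), y₀) ≠ 0 and φ_A(x₀(y₀), y₀) ≠ 0. Let a, b be nonnegative integers, let p, E ∈ ℂ, and set τ(x,y) := (x − x₀(y))^b φ(x,y) and τ_A(x,y) := (x − x₀(y))^a φ_A(x,y). If the Hirota bilinear equation ((D_y+E)−(D_x+p)²)τ_A·τ = 0 holds on a neighborhood of (x₀(y₀), y₀), then (a−b)² = a+b; equivalently, setting ν := a−b, one has a = ν(ν+1)/2 and b = ν(ν−1)/2. -/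
/-!
Where `f` and `g` do not vanish, dividing the Hirota expression by `f * g` turns it into a
polynomial in logarithmic derivatives,
`(log f)_y - (log g)_y + E - ((log f)_xx + (log g)_xx + ((log f)_x - (log g)_x + p)²)`.
If `f` and `g` have orders `a` and `b` at `x = x₀(y₀)` on the line `y = y₀`, then
`(log f)_x ~ a / (x - x₀)` and `(log f)_xx ~ -a / (x - x₀)²`, while a Cauchy estimate shows that
`(log f)_y` has at most a simple pole. The coefficient of `(x - x₀)⁻²` is therefore
`a + b - (a - b)²`, and it vanishes when the equation holds.
-/

open Filter Topology

theorem tendsto_sub_nhdsNE_zero {G : Type*} [AddGroup G] [TopologicalSpace G]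
    [IsTopologicalAddGroup G] (c : G) : Tendsto (fun x => x - c) (𝓝[≠] c) (𝓝 0) :=
  tendsto_sub_nhds_zero_iff.2 (tendsto_id'.2 nhdsWithin_le_nhds)

section LogDeriv

variable {𝕜 𝕜' : Type*} [NontriviallyNormedField 𝕜] [NontriviallyNormedField 𝕜']
  [NormedAlgebra 𝕜 𝕜']

theorem logDeriv_zpow_mul {u f : 𝕜 → 𝕜'} {x : 𝕜} (n : ℤ) (hu : DifferentiableAt 𝕜 u x)
    (hf : DifferentiableAt 𝕜 f x) (hux : u x ≠ 0) (hfx : f x ≠ 0) :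
    logDeriv (fun z => u z ^ n * f z) x = n * logDeriv u x + logDeriv f x := by
  have hpow : DifferentiableAt 𝕜 (fun z => u z ^ n) x :=
    ((differentiableAt_zpow.2 (.inl hux)).restrictScalars 𝕜).fun_comp' x hu
  rw [logDeriv_mul (f := fun z => u z ^ n) x (zpow_ne_zero n hux) hfx hpow hf,
    logDeriv_fun_zpow hu]

theorem deriv_logDeriv {f : 𝕜 → 𝕜'} {x : 𝕜} (hf : DifferentiableAt 𝕜 f x)
    (hf' : DifferentiableAt 𝕜 (deriv f) x) (hx : f x ≠ 0) :
    deriv (logDeriv f) x = deriv (deriv f) x / f x - logDeriv f x ^ 2 := by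
  rw [logDeriv, deriv_div hf' hf hx, Pi.div_apply]
  field_simp

variable [CompleteSpace 𝕜] {f : 𝕜 → 𝕜} {c : 𝕜} {n : ℤ}

theorem exists_analyticAt_logDeriv_eventuallyEq (hf : MeromorphicAt f c)
    (hn : meromorphicOrderAt f c = n) :
    ∃ h : 𝕜 → 𝕜, AnalyticAt 𝕜 h c ∧ logDeriv f =ᶠ[𝓝[≠] c] fun x => n / (x - c) + h x := by
  obtain ⟨g, hg, hgc, hfg⟩ := (meromorphicOrderAt_eq_int_iff hf).1 hn
  refine ⟨logDeriv g, hg.deriv.div hg hgc, (logDeriv_congr_nhdsNE hfg).trans ?_⟩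
  filter_upwards [self_mem_nhdsWithin, hg.eventually_analyticAt.filter_mono nhdsWithin_le_nhds,
    (hg.continuousAt.eventually_ne hgc).filter_mono nhdsWithin_le_nhds] with x hxc hgx hgx0
  simp only [smul_eq_mul]
  rw [logDeriv_zpow_mul (u := fun z => z - c) n (by fun_prop) hgx.differentiableAt
    (sub_ne_zero.2 hxc) hgx0, logDeriv_apply (fun z => z - c), deriv_sub_const, deriv_id'',
    mul_one_div]

theorem tendsto_sub_mul_logDeriv (hf : MeromorphicAt f c) (hn : meromorphicOrderAt f c = n) :
    Tendsto (fun x => (x - c) * logDeriv f x) (𝓝[≠] c) (𝓝 n) := by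
  obtain ⟨h, hh, hfh⟩ := exists_analyticAt_logDeriv_eventuallyEq hf hn
  have hlim : Tendsto (fun x => n + (x - c) * h x) (𝓝[≠] c) (𝓝 n) := by
    simpa using ((tendsto_sub_nhdsNE_zero c).mul
      (hh.continuousAt.tendsto.mono_left nhdsWithin_le_nhds)).const_add (n : 𝕜)
  refine hlim.congr' ?_
  filter_upwards [hfh, self_mem_nhdsWithin] with x hx hxc
  rw [hx, mul_add, mul_div_cancel₀ _ (sub_ne_zero.2 hxc)]

theorem tendsto_sub_sq_mul_deriv_logDeriv (hf : MeromorphicAt f c)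
    (hn : meromorphicOrderAt f c = n) :
    Tendsto (fun x => (x - c) ^ 2 * deriv (logDeriv f) x) (𝓝[≠] c) (𝓝 (-n)) := by
  obtain ⟨h, hh, hfh⟩ := exists_analyticAt_logDeriv_eventuallyEq hf hn
  have hlim : Tendsto (fun x => -n + (x - c) ^ 2 * deriv h x) (𝓝[≠] c) (𝓝 (-n)) := by
    simpa using (((tendsto_sub_nhdsNE_zero c).pow 2).mul
      (hh.deriv.continuousAt.tendsto.mono_left nhdsWithin_le_nhds)).const_add (-n : 𝕜)
  refine hlim.congr' ?_
  filter_upwards [hfh.nhdsNE_deriv, hh.eventually_analyticAt.filter_mono nhdsWithin_le_nhds,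
    self_mem_nhdsWithin] with x hx hhx hxc
  have hxc : x - c ≠ 0 := sub_ne_zero.2 hxc
  have hderiv : HasDerivAt (fun z => n / (z - c) + h z) (-n / (x - c) ^ 2 + deriv h x) x := by
    simpa using ((hasDerivAt_const x (n : 𝕜)).fun_div ((hasDerivAt_id' x).sub_const c) hxc).fun_add
      hhx.differentiableAt.hasDerivAt
  rw [hx, hderiv.deriv, mul_add, mul_div_cancel₀ _ (pow_ne_zero 2 hxc)]

end LogDeriv

section ZPowSMul

variable {𝕜 E : Type*} [NontriviallyNormedField 𝕜] [NormedAddCommGroup E] [NormedSpace 𝕜 E]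
  {h : 𝕜 → E} {c : 𝕜}

theorem meromorphicAt_zpow_sub_smul (hh : AnalyticAt 𝕜 h c) (n : ℤ) :
    MeromorphicAt (fun x => (x - c) ^ n • h x) c := by
  have hpow : MeromorphicAt (fun x => (x - c) ^ n) c := by fun_prop
  exact hpow.fun_smul hh.meromorphicAt

theorem meromorphicOrderAt_zpow_sub_smul (hh : AnalyticAt 𝕜 h c) (hhc : h c ≠ 0) (n : ℤ) :
    meromorphicOrderAt (fun x => (x - c) ^ n • h x) c = n :=
  (meromorphicOrderAt_eq_int_iff (meromorphicAt_zpow_sub_smul hh n)).2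
    ⟨h, hh, hhc, .of_forall fun _ => rfl⟩

end ZPowSMul

theorem analyticAt_fst_of_eventually_differentiableAt {E F : Type*} [NormedAddCommGroup E]
    [NormedSpace ℂ E] [NormedAddCommGroup F] [NormedSpace ℂ F] [CompleteSpace F]
    {f : ℂ × E → F} {c : ℂ} {y : E} (hf : ∀ᶠ q in 𝓝 (c, y), DifferentiableAt ℂ f q) :
    AnalyticAt ℂ (fun x => f (x, y)) c := by
  rw [Complex.analyticAt_iff_eventually_differentiableAt]
  filter_upwards [(Continuous.prodMk_left y).continuousAt.eventually hf] with x hx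
  exact hx.comp x (by fun_prop)

theorem isBoundedUnder_norm_deriv_snd {X F : Type*} [TopologicalSpace X] [NormedAddCommGroup F]
    [NormedSpace ℂ F] {f : X × ℂ → F} {x : X} {y : ℂ} (hf : ContinuousAt f (x, y))
    (hdf : ∀ᶠ q in 𝓝 (x, y), DifferentiableAt ℂ (fun t => f (q.1, t)) q.2) :
    IsBoundedUnder (· ≤ ·) (𝓝 x) fun s => ‖deriv (fun t => f (s, t)) y‖ := by
  have hbound : ∀ᶠ q in 𝓝 (x, y), ‖f q‖ < ‖f (x, y)‖ + 1 :=
    hf.norm.eventually_lt_const (lt_add_one _)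
  obtain ⟨⟨U, r⟩, ⟨hU, hr⟩, hUr⟩ :=
    ((𝓝 x).basis_sets.prod_nhds Metric.nhds_basis_closedBall).eventually_iff.1 (hbound.and hdf)
  refine isBoundedUnder_of_eventually_le (a := (‖f (x, y)‖ + 1) / r) ?_
  filter_upwards [hU] with s hs
  refine Complex.norm_deriv_le_of_forall_mem_sphere_norm_le hr ?_ fun t ht =>
    (hUr (Set.mk_mem_prod hs (Metric.sphere_subset_closedBall ht))).1.le
  exact DifferentiableOn.diffContOnCl_ball (U := Metric.closedBall y r)
    (fun t ht => (hUr (Set.mk_mem_prod hs ht)).2.differentiableWithinAt) subset_rfl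

theorem tendsto_sub_sq_mul_logDeriv_snd {x₀ : ℂ → ℂ} {y₀ : ℂ} {φ : ℂ × ℂ → ℂ}
    (hx₀ : DifferentiableAt ℂ x₀ y₀) (hφ : ContinuousAt φ (x₀ y₀, y₀))
    (hdφ : ∀ᶠ q in 𝓝 (x₀ y₀, y₀), DifferentiableAt ℂ (fun y => φ (q.1, y)) q.2)
    (hφ0 : φ (x₀ y₀, y₀) ≠ 0) (n : ℤ) :
    Tendsto (fun x => (x - x₀ y₀) ^ 2 * logDeriv (fun y => (x - x₀ y) ^ n * φ (x, y)) y₀)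
      (𝓝[≠] x₀ y₀) (𝓝 0) := by
  have hslice : ContinuousAt (fun x => (x, y₀)) (x₀ y₀) := (Continuous.prodMk_left y₀).continuousAt
  have hφ_slice : ContinuousAt (fun x => φ (x, y₀)) (x₀ y₀) :=
    ContinuousAt.comp (f := fun x => (x, y₀)) hφ hslice
  have hsub := tendsto_sub_nhdsNE_zero (x₀ y₀)
  have hφy : Tendsto (fun x => (x - x₀ y₀) * deriv (fun y => φ (x, y)) y₀) (𝓝[≠] x₀ y₀) (𝓝 0) :=
    hsub.zero_mul_isBoundedUnder_le
      ((isBoundedUnder_norm_deriv_snd hφ hdφ).mono nhdsWithin_le_nhds)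
  have hlim : Tendsto (fun x => (x - x₀ y₀) * (n * -deriv x₀ y₀) +
      (x - x₀ y₀) * ((x - x₀ y₀) * deriv (fun y => φ (x, y)) y₀) / φ (x, y₀))
      (𝓝[≠] x₀ y₀) (𝓝 0) := by
    simpa using (hsub.mul_const (n * -deriv x₀ y₀)).add ((hsub.mul hφy).div
      (hφ_slice.tendsto.mono_left nhdsWithin_le_nhds) hφ0)
  refine hlim.congr' ?_
  filter_upwards [self_mem_nhdsWithin, (hslice.eventually hdφ).filter_mono nhdsWithin_le_nhds,
    (hφ_slice.eventually_ne hφ0).filter_mono nhdsWithin_le_nhds] with x hx hφx hφx0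
  have hx : x - x₀ y₀ ≠ 0 := sub_ne_zero.2 hx
  rw [logDeriv_zpow_mul (u := fun y => x - x₀ y) n (hx₀.const_sub x) hφx hx hφx0,
    logDeriv_apply, logDeriv_apply, deriv_const_sub]
  field_simp

section Hirota

variable (p E : ℂ) {f g : ℂ × ℂ → ℂ}

theorem hirotaL_eq_mul_logDeriv {x y : ℂ} (hf : AnalyticAt ℂ (fun s => f (s, y)) x)
    (hg : AnalyticAt ℂ (fun s => g (s, y)) x) (hf0 : f (x, y) ≠ 0) (hg0 : g (x, y) ≠ 0) :
    HirotaL p E f g (x, y) = f (x, y) * g (x, y) *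
      (logDeriv (fun t => f (x, t)) y - logDeriv (fun t => g (x, t)) y + E -
        (deriv (logDeriv fun s => f (s, y)) x + deriv (logDeriv fun s => g (s, y)) x +
          (logDeriv (fun s => f (s, y)) x - logDeriv (fun s => g (s, y)) x + p) ^ 2)) := by
  rw [deriv_logDeriv hf.differentiableAt hf.deriv.differentiableAt hf0,
    deriv_logDeriv hg.differentiableAt hg.deriv.differentiableAt hg0]
  simp only [HirotaL, Dy, Dx, Dx2, pdx, pdy, logDeriv_apply]
  field_simp
  ring

theorem tendsto_sub_sq_mul_hirotaL_div {c y : ℂ} {a b : ℤ}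
    (hf : MeromorphicAt (fun x => f (x, y)) c) (hg : MeromorphicAt (fun x => g (x, y)) c)
    (ha : meromorphicOrderAt (fun x => f (x, y)) c = a)
    (hb : meromorphicOrderAt (fun x => g (x, y)) c = b)
    (hfy : Tendsto (fun x => (x - c) ^ 2 * logDeriv (fun t => f (x, t)) y) (𝓝[≠] c) (𝓝 0))
    (hgy : Tendsto (fun x => (x - c) ^ 2 * logDeriv (fun t => g (x, t)) y) (𝓝[≠] c) (𝓝 0)) :
    Tendsto (fun x => (x - c) ^ 2 * (HirotaL p E f g (x, y) / (f (x, y) * g (x, y))))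
      (𝓝[≠] c) (𝓝 (a + b - (a - b) ^ 2)) := by
  have hsub := tendsto_sub_nhdsNE_zero c
  have hf0 := (meromorphicOrderAt_ne_top_iff_eventually_ne_zero hf).1 (ha ▸ WithTop.coe_ne_top)
  have hg0 := (meromorphicOrderAt_ne_top_iff_eventually_ne_zero hg).1 (hb ▸ WithTop.coe_ne_top)
  have hfirst : Tendsto (fun x => (x - c) * logDeriv (fun s => f (s, y)) x -
      (x - c) * logDeriv (fun s => g (s, y)) x + (x - c) * p) (𝓝[≠] c) (𝓝 (a - b + 0 * p)) :=
    ((tendsto_sub_mul_logDeriv hf ha).sub (tendsto_sub_mul_logDeriv hg hb)).add (hsub.mul_const p)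
  have hsecond : Tendsto (fun x => (x - c) ^ 2 * deriv (logDeriv fun s => f (s, y)) x +
      (x - c) ^ 2 * deriv (logDeriv fun s => g (s, y)) x) (𝓝[≠] c) (𝓝 (-a + -b)) :=
    (tendsto_sub_sq_mul_deriv_logDeriv hf ha).add (tendsto_sub_sq_mul_deriv_logDeriv hg hb)
  have hlim := ((hfy.sub hgy).add ((hsub.pow 2).mul_const E)).sub (hsecond.add (hfirst.pow 2))
  convert hlim.congr' ?_ using 2
  · ring
  filter_upwards [hf.eventually_analyticAt, hg.eventually_analyticAt, hf0, hg0]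
    with x hfx hgx hfx0 hgx0
  rw [hirotaL_eq_mul_logDeriv p E hfx hgx hfx0 hgx0, mul_div_cancel_left₀ _ (mul_ne_zero hfx0 hgx0)]
  ring

end Hirota

theorem stmt_4_general {x₀ : ℂ → ℂ} {y₀ : ℂ} (hx₀ : DifferentiableAt ℂ x₀ y₀)
    {φ φA : ℂ × ℂ → ℂ} (hφ : ∀ᶠ q in 𝓝 (x₀ y₀, y₀), DifferentiableAt ℂ φ q)
    (hφA : ∀ᶠ q in 𝓝 (x₀ y₀, y₀), DifferentiableAt ℂ φA q)
    (hφ0 : φ (x₀ y₀, y₀) ≠ 0) (hφA0 : φA (x₀ y₀, y₀) ≠ 0) {a b : ℤ} {p E : ℂ}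
    (heq : ∃ᶠ x in 𝓝[≠] x₀ y₀,
      HirotaL p E (fun r => (r.1 - x₀ r.2) ^ a * φA r)
        (fun r => (r.1 - x₀ r.2) ^ b * φ r) (x, y₀) = 0) :
    (a - b) ^ 2 = a + b ∧ 2 * a = (a - b) * (a - b + 1) ∧ 2 * b = (a - b) * (a - b - 1) := by
  have hslice := analyticAt_fst_of_eventually_differentiableAt hφ
  have hsliceA := analyticAt_fst_of_eventually_differentiableAt hφA
  have hlim := tendsto_sub_sq_mul_hirotaL_div p E
    (f := fun r => (r.1 - x₀ r.2) ^ a * φA r) (g := fun r => (r.1 - x₀ r.2) ^ b * φ r)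
    (meromorphicAt_zpow_sub_smul hsliceA a) (meromorphicAt_zpow_sub_smul hslice b)
    (meromorphicOrderAt_zpow_sub_smul hsliceA hφA0 a)
    (meromorphicOrderAt_zpow_sub_smul hslice hφ0 b)
    (tendsto_sub_sq_mul_logDeriv_snd hx₀ hφA.self_of_nhds.continuousAt
      (hφA.mono fun q hq => hq.comp q.2 (by fun_prop)) hφA0 a)
    (tendsto_sub_sq_mul_logDeriv_snd hx₀ hφ.self_of_nhds.continuousAt
      (hφ.mono fun q hq => hq.comp q.2 (by fun_prop)) hφ0 b)
  have hcoeff : (a + b - (a - b) ^ 2 : ℂ) = 0 :=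
    isClosed_singleton.mem_of_frequently_of_tendsto (heq.mono fun x hx => by simp [hx]) hlim
  have hsq : (a - b) ^ 2 = a + b := by exact_mod_cast (sub_eq_zero.1 hcoeff).symm
  exact ⟨hsq, by linarith, by linarith⟩

/-- forward direction of Lemma 2.1: if
`τ = (x − x₀(y))^b φ` and `τ_A = (x − x₀(y))^a φ_A`, with φ, φ_A holomorphic and
nonvanishing at (x₀(y₀), y₀), satisfy the Hirota bilinear equation
`((D_y+E)−(D_x+p)²)τ_A·τ = 0` on a neighborhood of (x₀(y₀), y₀), then
`(a−b)² = a+b`; equivalently, with ν := a−b, `a = ν(ν+1)/2` and `b = ν(ν−1)/2`. -/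
theorem stmt_4 (D : Set ℂ) (hD : IsOpen D)
    (x₀ : ℂ → ℂ) (hx₀ : DifferentiableOn ℂ x₀ D)
    (y₀ : ℂ) (hy₀ : y₀ ∈ D)
    (φ φA : ℂ × ℂ → ℂ)
    (V : Set (ℂ × ℂ)) (hV : V ∈ nhds ((x₀ y₀, y₀) : ℂ × ℂ))
    (hφ : DifferentiableOn ℂ φ V) (hφA : DifferentiableOn ℂ φA V)
    (hφ0 : φ (x₀ y₀, y₀) ≠ 0) (hφA0 : φA (x₀ y₀, y₀) ≠ 0)
    (a b : ℕ) (p E : ℂ)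
    (W : Set (ℂ × ℂ)) (hW : W ∈ nhds ((x₀ y₀, y₀) : ℂ × ℂ))
    (heq : ∀ q ∈ W,
      HirotaL p E (fun r => (r.1 - x₀ r.2) ^ a * φA r)
        (fun r => (r.1 - x₀ r.2) ^ b * φ r) q = 0) :
    ((a : ℤ) - (b : ℤ)) ^ 2 = (a : ℤ) + (b : ℤ) ∧
    2 * (a : ℤ) = ((a : ℤ) - (b : ℤ)) * (((a : ℤ) - (b : ℤ)) + 1) ∧
    2 * (b : ℤ) = ((a : ℤ) - (b : ℤ)) * (((a : ℤ) - (b : ℤ)) - 1) := by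
  refine stmt_4_general (hx₀.differentiableAt (hD.mem_nhds hy₀)) (hφ.eventually_differentiableAt hV)
    (hφA.eventually_differentiableAt hV) hφ0 hφA0 (p := p) (E := E) (Eventually.frequently ?_)
  simpa only [zpow_natCast] using
    (((Continuous.prodMk_left y₀).continuousAt.eventually hW).filter_mono nhdsWithin_le_nhds).mono
      fun x hx => heq (x, y₀) hx
end

section
/- Let f : ℂ² → ℂ be an entire function satisfying the heat equation ∂_y f = ∂_x² f. Let ν ∈ ℤ, set a := ν(ν+1)/2 and b := ν(ν−1)/2 (which are nonnegative integers), and let p, E ∈ ℂ. Define τ(x,y) := f(x, νy)^b and τ_A(x,y) := e^{−px−Ey} f(x, νy)^a. Then the Hirota bilinear equation ((D_y+E)−(D_x+p)²)τ_A·τ = 0 holds identically on ℂ². -/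
/-!
An exponential gauge factor `e^{-kx-ωy}` on the first argument shifts `(p, E)` to `(p - k, E - ω)`,
so with `k = p` and `ω = E` the equation becomes `D_y g^a·g^b = D_x² g^a·g^b`, where
`g(x, y) = f(x, νy)`. Direct computation gives
`D_y g^a·g^b = (a - b) g^(a+b-1) g_y` and
`D_x² g^a·g^b = (a + b) g^(a+b-1) g_xx + ((a - b)² - (a + b)) g^(a+b-2) g_x²`.
For the triangular exponents, `a - b = ν` and `a + b = ν²`: the `g_x²` term cancels, and what
remains is the rescaled heat equation `g_y = ν g_xx`.
-/

section SecondDerivatives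

variable {𝕜 : Type*} [NontriviallyNormedField 𝕜] {x : 𝕜}

lemma deriv_deriv_mul_s5 {𝔸 : Type*} [NormedRing 𝔸] [NormedAlgebra 𝕜 𝔸] {u v : 𝕜 → 𝔸}
    (hu : ContDiffAt 𝕜 2 u x) (hv : ContDiffAt 𝕜 2 v x) :
    deriv (deriv fun t => u t * v t) x =
      deriv (deriv u) x * v x + 2 * (deriv u x * deriv v x) + u x * deriv (deriv v) x := by
  have leibniz := iteratedDeriv_fun_mul (n := 2) hu hv
  simp only [Finset.sum_range_succ, Finset.sum_range_zero, iteratedDeriv_zero,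
    iteratedDeriv_succ] at leibniz
  rw [leibniz]
  simp [mul_assoc, add_comm, add_left_comm]

lemma deriv_deriv_pow {𝔸 : Type*} [NormedCommRing 𝔸] [NormedAlgebra 𝕜 𝔸] {u : 𝕜 → 𝔸}
    (hu : ContDiffAt 𝕜 2 u x) (n : ℕ) :
    deriv (deriv fun t => u t ^ n) x =
      n * (n - 1) * u x ^ (n - 2) * deriv u x ^ 2 + n * u x ^ (n - 1) * deriv (deriv u) x := by
  have hu_diff : DifferentiableAt 𝕜 u x := hu.differentiableAt two_ne_zero
  have hu'_diff : DifferentiableAt 𝕜 (deriv u) x :=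
    (hu.derivWithin (m := 1) (by norm_num)).differentiableAt one_ne_zero
  have hpow_deriv : deriv (fun t => u t ^ n) =ᶠ[nhds x]
      fun t => n * u t ^ (n - 1) * deriv u t := by
    filter_upwards [hu.eventually (by simp)] with t ht
    exact deriv_fun_pow (ht.differentiableAt two_ne_zero) n
  rw [hpow_deriv.deriv_eq, deriv_fun_mul (by fun_prop) hu'_diff, deriv_const_mul _ (by fun_prop),
    deriv_fun_pow hu_diff]
  rcases n with _ | n <;> grind

end SecondDerivatives

section BilinearOperators

lemma hirotaL_zero_zero (F G : ℂ × ℂ → ℂ) (q : ℂ × ℂ) :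
    HirotaL 0 0 F G q = Dy F G q - Dx2 F G q := by
  simp [HirotaL]

variable {F G g : ℂ × ℂ → ℂ} {q : ℂ × ℂ}

lemma hirotaL_exp_mul (hFx : ContDiffAt ℂ 2 (fun x => F (x, q.2)) q.1)
    (hFy : DifferentiableAt ℂ (fun y => F (q.1, y)) q.2) (p E k ω : ℂ) :
    HirotaL p E (fun r => Complex.exp (-(k * r.1) - ω * r.2) * F r) G q =
      Complex.exp (-(k * q.1) - ω * q.2) * HirotaL (p - k) (E - ω) F G q := by
  obtain ⟨x, y⟩ := q
  have hexp_x : deriv (fun t => Complex.exp (-(k * t) - ω * y)) =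
      fun t => Complex.exp (-(k * t) - ω * y) * -k := by
    funext t
    rw [deriv_cexp (by fun_prop)]
    simp
  have hexp_xx : deriv (deriv fun t => Complex.exp (-(k * t) - ω * y)) x =
      Complex.exp (-(k * x) - ω * y) * k ^ 2 := by
    rw [hexp_x, deriv_mul_const (by fun_prop), hexp_x]
    ring
  have hexp_y : deriv (fun t => Complex.exp (-(k * x) - ω * t)) y =
      Complex.exp (-(k * x) - ω * y) * -ω := by
    rw [deriv_cexp (by fun_prop)]
    simp
  simp only [HirotaL, Dx, Dy, Dx2, pdx, pdy]
  rw [deriv_deriv_mul_s5 (by fun_prop) hFx,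
    deriv_fun_mul (by fun_prop) (hFx.differentiableAt two_ne_zero),
    deriv_fun_mul (by fun_prop) hFy, hexp_xx, hexp_x, hexp_y]
  ring

lemma dy_pow_pow (hg : DifferentiableAt ℂ (fun y => g (q.1, y)) q.2) (a b : ℕ) :
    Dy (fun r => g r ^ a) (fun r => g r ^ b) q =
      (a - b) * g q ^ (a + b - 1) * pdy g q := by
  simp only [Dy, pdy, deriv_fun_pow hg]
  rcases a with _ | a <;> rcases b with _ | b <;> grind

lemma dx2_pow_pow (hg : ContDiffAt ℂ 2 (fun x => g (x, q.2)) q.1) (a b : ℕ) :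
    Dx2 (fun r => g r ^ a) (fun r => g r ^ b) q =
      (a + b) * g q ^ (a + b - 1) * pdx (pdx g) q
        + ((a - b) ^ 2 - (a + b)) * g q ^ (a + b - 2) * pdx g q ^ 2 := by
  simp only [Dx2, pdx, deriv_deriv_pow hg, deriv_fun_pow (hg.differentiableAt two_ne_zero)]
  -- Natural-number subtraction truncates an exponent only where its coefficient vanishes.
  rcases a with _ | _ | a <;> rcases b with _ | _ | b <;> grind

end BilinearOperators

theorem stmt_5_general (f : ℂ × ℂ → ℂ) (ν : ℤ) (a b : ℕ)
    (ha : 2 * (a : ℤ) = ν * (ν + 1)) (hb : 2 * (b : ℤ) = ν * (ν - 1)) (p E : ℂ) (q : ℂ × ℂ)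
    (hfx : ContDiffAt ℂ 2 (fun x => f (x, ν * q.2)) q.1)
    (hfy : DifferentiableAt ℂ (fun y => f (q.1, y)) (ν * q.2))
    (hheat : pdy f (q.1, ν * q.2) = pdx (pdx f) (q.1, ν * q.2)) :
    HirotaL p E
      (fun r => Complex.exp (-(p * r.1) - E * r.2) * f (r.1, (ν : ℂ) * r.2) ^ a)
      (fun r => f (r.1, (ν : ℂ) * r.2) ^ b) q = 0 := by
  have hsub : (a : ℂ) - b = ν := by
    have : (a : ℤ) - b = ν := by linarith
    exact_mod_cast this
  have hadd : (a : ℂ) + b = ν ^ 2 := by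
    have : (a : ℤ) + b = ν ^ 2 := by linarith
    exact_mod_cast this
  set g : ℂ × ℂ → ℂ := fun r => f (r.1, ν * r.2)
  have hgy : DifferentiableAt ℂ (fun y => g (q.1, y)) q.2 :=
    hfy.fun_comp' q.2 (by fun_prop)
  have hheat_g : pdy g q = ν * pdx (pdx g) q :=
    (deriv_comp_mul_left (ν : ℂ) (fun y => f (q.1, y)) q.2).trans (congrArg ((ν : ℂ) * ·) hheat)
  rw [hirotaL_exp_mul (hfx.pow a) (hgy.pow a), sub_self, sub_self, hirotaL_zero_zero,
    dy_pow_pow hgy, dx2_pow_pow hfx, hsub, hadd, hheat_g]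
  ring

/-- converse direction of Lemma 2.1: for an entire solution f of the
heat equation ∂_y f = ∂_x² f, ν ∈ ℤ, a = ν(ν+1)/2, b = ν(ν−1)/2, p, E ∈ ℂ, the pair
`τ = f(x, νy)^b`, `τ_A = e^{−px−Ey} f(x, νy)^a` satisfies the Hirota bilinear
equation `((D_y+E)−(D_x+p)²)τ_A·τ = 0` identically. -/
theorem stmt_5 (f : ℂ × ℂ → ℂ) (hf : Differentiable ℂ f)
    (hheat : ∀ q : ℂ × ℂ, pdy f q = pdx (pdx f) q)
    (ν : ℤ) (a b : ℕ)
    (ha : 2 * (a : ℤ) = ν * (ν + 1)) (hb : 2 * (b : ℤ) = ν * (ν - 1))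
    (p E : ℂ) :
    ∀ q : ℂ × ℂ,
      HirotaL p E
        (fun r => Complex.exp (-(p * r.1) - E * r.2) * f (r.1, (ν : ℂ) * r.2) ^ a)
        (fun r => f (r.1, (ν : ℂ) * r.2) ^ b) q = 0 :=
  fun q => stmt_5_general f ν a b ha hb p E q
    (Differentiable.contDiff (by fun_prop)).contDiffAt (by fun_prop) (hheat _)
end

section
/- Let D ⊆ ℂ be open, let x₀, α : D → ℂ be holomorphic, let Ω ⊆ ℂ² be an open set containing the graph {(x₀(y), y) : y ∈ D}, and let ũ, ψ̃ : Ω → ℂ be holomorphic. For (x,y) ∈ Ω with x ≠ x₀(y), define u(x,y) := 2/(x − x₀(y))² + ũ(x,y) and ψ(x,y) := α(y)/(x − x₀(y)) + ψ̃(x,y), and assume ∂_yψ − ∂_x²ψ + uψ = 0 holds at all such points. Set v(y) := ũ(x₀(y), y), w(y) := ∂_xũ(x₀(y), y), β(y) := ψ̃(x₀(y), y), γ(y) := ∂_xψ̃(x₀(y), y). Then for every y ∈ D the following three equations hold: α(y)·x₀'(y) + 2β(y) = 0; α'(y) + α(y)v(y) + 2γ(y) = 0; β'(y) + v(y)β(y)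 − γ(y)x₀'(y) + α(y)w(y) = 0. -/
/-- The meromorphic solution `ψ = α(y)/(x − x₀(y)) + ψ̃(x,y)`. -/
noncomputable def psiPole (x₀ α : ℂ → ℂ) (ψt : ℂ × ℂ → ℂ) : ℂ × ℂ → ℂ :=
  fun q => α q.2 / (q.1 - x₀ q.2) + ψt q

/-- The potential `u = 2/(x − x₀(y))² + ũ(x,y)`. -/
noncomputable def uPole (x₀ : ℂ → ℂ) (ut : ℂ × ℂ → ℂ) : ℂ × ℂ → ℂ :=
  fun q => 2 / (q.1 - x₀ q.2) ^ 2 + ut q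

/-!
On a horizontal line `y = const` the equation multiplied by `(x - x₀(y))²` has no pole left: the
terms of order `(x - x₀)⁻³` cancel because the leading coefficient of `u` is `2`. Its Taylor
coefficients of order `0`, `1` and `2` at `x = x₀(y)` therefore vanish. The first two are the first
two equations. In the third one `-∂ₓ²ψ̃` cancels twice the second Taylor coefficient of `ψ̃`, which
leaves `∂_yψ̃ + vβ + αw = 0`, and `∂_yψ̃ = β' - γ x₀'` on the graph of `x₀`. Reading off the third
coefficient requires `x ↦ ∂_yψ̃(x, y)` to be continuous, which follows from Weierstrass's theorem on
the derivatives of locally uniform limits.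
-/

open Filter Topology

section Coefficients

variable {𝕜 E : Type*} [NontriviallyNormedField 𝕜] [NormedAddCommGroup E] [NormedSpace 𝕜 E]
  {a : 𝕜} {c c₀ c₁ : E} {k : 𝕜 → E}

lemma eventually_eq_zero_of_const_add_sub_smul_eq_zero (hk : ContinuousAt k a)
    (h : ∀ᶠ x in 𝓝[≠] a, c + (x - a) • k x = 0) : c = 0 ∧ ∀ᶠ x in 𝓝 a, k x = 0 := by
  have h_nhds : ∀ᶠ x in 𝓝 a, c + (x - a) • k x = 0 :=
    (ContinuousAt.eventuallyEq_nhds_iff_eventuallyEq_nhdsNE (by fun_prop)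
      continuousAt_const).1 h
  have hc : c = 0 := by simpa using h_nhds.self_of_nhds
  refine ⟨hc, (hk.eventuallyEq_nhds_iff_eventuallyEq_nhdsNE continuousAt_const).1 ?_⟩
  filter_upwards [h, self_mem_nhdsWithin] with x hx hxa
  simpa [hc, sub_ne_zero.2 hxa] using hx

lemma eq_zero_of_quadratic_eq_zero (hk : ContinuousAt k a)
    (h : ∀ᶠ x in 𝓝[≠] a, c₀ + (x - a) • (c₁ + (x - a) • k x) = 0) :
    c₀ = 0 ∧ c₁ = 0 ∧ k a = 0 := by
  obtain ⟨hc₀, h₁⟩ := eventually_eq_zero_of_const_add_sub_smul_eq_zero (by fun_prop) h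
  obtain ⟨hc₁, h₂⟩ := eventually_eq_zero_of_const_add_sub_smul_eq_zero hk
    (h₁.filter_mono nhdsWithin_le_nhds)
  exact ⟨hc₀, hc₁, h₂.self_of_nhds⟩

lemma eq_add_sub_smul_dslope (f : 𝕜 → E) (a x : 𝕜) : f x = f a + (x - a) • dslope f a x := by
  rw [sub_smul_dslope, add_sub_cancel]

lemma analyticAt_dslope {f : 𝕜 → E} (hf : AnalyticAt 𝕜 f a) : AnalyticAt 𝕜 (dslope f a) a :=
  let ⟨_, hp⟩ := hf
  hp.has_fpower_series_dslope_fslope.analyticAt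

end Coefficients

section SimplePole

variable {𝕜 : Type*} [NontriviallyNormedField 𝕜] {a x : 𝕜} {f : 𝕜 → 𝕜}

lemma iterate_dslope_same [CompleteSpace 𝕜] [CharZero 𝕜] (hf : AnalyticAt 𝕜 f a) (n : ℕ) :
    (Function.swap dslope a)^[n] f a = iteratedDeriv n f a / n.factorial := by
  have h := (hf.hasFPowerSeriesAt.has_fpower_series_iterate_dslope_fslope n).coeff_zero 1
  exact h.symm.trans (by
    change FormalMultilinearSeries.coeff _ 0 = _
    rw [FormalMultilinearSeries.coeff_iterate_fslope, FormalMultilinearSeries.coeff_ofScalars,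
      zero_add])

lemma dslope_dslope_same [CompleteSpace 𝕜] [CharZero 𝕜] (hf : AnalyticAt 𝕜 f a) :
    dslope (dslope f a) a a = deriv (deriv f) a / 2 := by
  simpa [Function.swap, iteratedDeriv_succ] using iterate_dslope_same hf 2

lemma hasDerivAt_const_div_sub_pow (hx : x ≠ a) (c : 𝕜) (n : ℕ) :
    HasDerivAt (fun z => c / (z - a) ^ n) (-(n * c) / (x - a) ^ (n + 1)) x := by
  have hne : x - a ≠ 0 := sub_ne_zero.2 hx
  refine ((hasDerivAt_const x c).fun_div (((hasDerivAt_id' x).sub_const a).fun_pow n)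
    (pow_ne_zero n hne)).congr_deriv ?_
  rcases n with _ | n
  · simp
  · rw [Nat.add_sub_cancel]
    field_simp
    ring

lemma deriv_deriv_const_div_sub_add [CompleteSpace 𝕜] (hf : AnalyticAt 𝕜 f x) (hx : x ≠ a)
    (c : 𝕜) :
    deriv (deriv fun z => c / (z - a) + f z) x = 2 * c / (x - a) ^ 3 + deriv (deriv f) x := by
  have h_first : deriv (fun z => c / (z - a) + f z) =ᶠ[𝓝 x]
      fun z => -c / (z - a) ^ 2 + deriv f z := by
    filter_upwards [hf.eventually_analyticAt, eventually_ne_nhds hx] with z hfz hz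
    simpa using ((hasDerivAt_const_div_sub_pow hz c 1).fun_add
      hfz.differentiableAt.hasDerivAt).deriv
  rw [h_first.deriv_eq]
  simpa using ((hasDerivAt_const_div_sub_pow hx (-c) 2).fun_add
    hf.deriv.differentiableAt.hasDerivAt).deriv

variable [CompleteSpace 𝕜] {g h : 𝕜 → 𝕜} {A B C : 𝕜}

lemma quadratic_eq_zero_of_pole_equation (hf : AnalyticAt 𝕜 f x) (hx : x ≠ a)
    (heq : C / (x - a) ^ 2 + B / (x - a) + h x
      - deriv (deriv fun z => A / (z - a) + f z) x
      + (2 / (x - a) ^ 2 + g x) * (A / (x - a) + f x) = 0) :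
    C + 2 * f a + (x - a) * (B + A * g a + 2 * deriv f a
      + (x - a) * (2 * dslope (dslope f a) a x + A * dslope g a x
        + h x - deriv (deriv f) x + g x * f x)) = 0 := by
  have hne : x - a ≠ 0 := sub_ne_zero.2 hx
  have hcleared : C + 2 * f x + (x - a) * (B + A * g x)
      + (x - a) ^ 2 * (h x - deriv (deriv f) x + g x * f x) = 0 := by
    rw [deriv_deriv_const_div_sub_add hf hx] at heq
    field_simp at heq
    refine (mul_eq_zero.1 (?_ : (x - a) * _ = 0)).resolve_left hne
    linear_combination heq
  have hf₁ := eq_add_sub_smul_dslope f a x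
  have hf₂ := eq_add_sub_smul_dslope (dslope f a) a x
  have hg₁ := eq_add_sub_smul_dslope g a x
  simp only [smul_eq_mul, dslope_same] at hf₁ hf₂ hg₁
  linear_combination hcleared - 2 * hf₁ - 2 * (x - a) * hf₂ - A * (x - a) * hg₁

lemma coefficients_of_pole_equation [CharZero 𝕜] (hf : AnalyticAt 𝕜 f a)
    (hg : DifferentiableAt 𝕜 g a) (hh : ContinuousAt h a)
    (heq : ∀ᶠ x in 𝓝[≠] a, C / (x - a) ^ 2 + B / (x - a) + h x
      - deriv (deriv fun z => A / (z - a) + f z) x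
      + (2 / (x - a) ^ 2 + g x) * (A / (x - a) + f x) = 0) :
    C + 2 * f a = 0 ∧ B + A * g a + 2 * deriv f a = 0 ∧
      h a + g a * f a + A * deriv g a = 0 := by
  have hf_cont := hf.continuousAt
  have hf'' : ContinuousAt (deriv (deriv f)) a := hf.deriv.deriv.continuousAt
  have hf₂ : ContinuousAt (dslope (dslope f a) a) a :=
    (analyticAt_dslope (analyticAt_dslope hf)).continuousAt
  have hg_cont := hg.continuousAt
  have hg₁ : ContinuousAt (dslope g a) a := continuousAt_dslope_same.2 hg
  obtain ⟨h₀, h₁, h₂⟩ := eq_zero_of_quadratic_eq_zero (𝕜 := 𝕜) (c₀ := C + 2 * f a)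
    (c₁ := B + A * g a + 2 * deriv f a)
    (k := fun x => 2 * dslope (dslope f a) a x + A * dslope g a x
        + h x - deriv (deriv f) x + g x * f x) (by fun_prop) (by
      filter_upwards [heq, nhdsWithin_le_nhds hf.eventually_analyticAt, self_mem_nhdsWithin]
        with x hx hfx hxa using quadratic_eq_zero_of_pole_equation hfx hxa hx)
  refine ⟨h₀, h₁, ?_⟩
  simp only [dslope_dslope_same hf, dslope_same] at h₂
  linear_combination h₂

end SimplePole

lemma continuousAt_deriv_of_eventually_differentiableAt {X E : Type*} [TopologicalSpace X]
    [NormedAddCommGroup E] [NormedSpace ℂ E] [CompleteSpace E] {f : X × ℂ → E} {a : X} {z : ℂ}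
    (hc : ∀ᶠ p in 𝓝 (a, z), ContinuousAt f p)
    (hd : ∀ᶠ p in 𝓝 (a, z), DifferentiableAt ℂ (fun w => f (p.1, w)) p.2) :
    ContinuousAt (fun x => deriv (fun w => f (x, w)) z) a := by
  obtain ⟨U, V, hU, haU, hV, hzV, hUV⟩ := mem_nhds_prod_iff'.1 (hc.and hd)
  have hlim : TendstoLocallyUniformlyOn (fun x w => f (x, w)) (fun w => f (a, w)) (𝓝 a) V := by
    refine hV.tendstoLocallyUniformlyOn_iff_forall_tendsto.2 fun w hw => ?_
    have hf : ContinuousAt f (a, w) := (hUV ⟨haU, hw⟩).1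
    have hfa : ContinuousAt (fun p : X × ℂ => f (a, p.2)) (a, w) :=
      ContinuousAt.comp (f := fun p : X × ℂ => (a, p.2)) hf (by fun_prop)
    rw [← nhds_prod_eq]
    exact (hfa.tendsto.prodMk_nhds hf.tendsto).mono_right (nhds_le_uniformity _)
  have hdiff : ∀ᶠ x in 𝓝 a, DifferentiableOn ℂ (fun w => f (x, w)) V :=
    (hU.eventually_mem haU).mono fun x hx w hw =>
      (hUV (a := (x, w)) ⟨hx, hw⟩).2.differentiableWithinAt
  exact (hlim.deriv hdiff hV).tendsto_at hzV

lemma fderiv_apply_eq_pdx_add_pdy {f : ℂ × ℂ → ℂ} {p : ℂ × ℂ} (hf : DifferentiableAt ℂ f p)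
    (v : ℂ × ℂ) : fderiv ℂ f p v = v.1 * pdx f p + v.2 * pdy f p := by
  have hx : pdx f p = fderiv ℂ f p (1, 0) :=
    (hf.hasFDerivAt.comp_hasDerivAt p.1
      ((hasDerivAt_id p.1).prodMk (hasDerivAt_const p.1 p.2))).deriv
  have hy : pdy f p = fderiv ℂ f p (0, 1) :=
    (hf.hasFDerivAt.comp_hasDerivAt p.2
      ((hasDerivAt_const p.2 p.1).prodMk (hasDerivAt_id p.2))).deriv
  rw [hx, hy, ← smul_eq_mul, ← smul_eq_mul, ← map_smul, ← map_smul, ← map_add]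
  simp

lemma deriv_comp_graph {ξ : ℂ → ℂ} {f : ℂ × ℂ → ℂ} {y : ℂ} (hξ : DifferentiableAt ℂ ξ y)
    (hf : DifferentiableAt ℂ f (ξ y, y)) :
    deriv (fun z => f (ξ z, z)) y = deriv ξ y * pdx f (ξ y, y) + pdy f (ξ y, y) := by
  have h := HasFDerivAt.comp_hasDerivAt (f := fun z => (ξ z, z)) y hf.hasFDerivAt
    (hξ.hasDerivAt.prodMk (hasDerivAt_id' y))
  simpa [Function.comp_def, fderiv_apply_eq_pdx_add_pdy hf] using h.deriv

lemma pdy_psiPole {x₀ α : ℂ → ℂ} {ψt : ℂ × ℂ → ℂ} {x y : ℂ} (hx₀ : DifferentiableAt ℂ x₀ y)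
    (hα : DifferentiableAt ℂ α y) (hψt : DifferentiableAt ℂ (fun z => ψt (x, z)) y)
    (hx : x ≠ x₀ y) :
    pdy (psiPole x₀ α ψt) (x, y) =
      α y * deriv x₀ y / (x - x₀ y) ^ 2 + deriv α y / (x - x₀ y) + pdy ψt (x, y) := by
  have hne : x - x₀ y ≠ 0 := sub_ne_zero.2 hx
  refine ((hα.hasDerivAt.fun_div (hx₀.hasDerivAt.const_sub x) hne).fun_add
    hψt.hasDerivAt).deriv.trans ?_
  simp only [pdy]
  field_simp
  ring

theorem stmt_6_general {x₀ α : ℂ → ℂ} {ut ψt : ℂ × ℂ → ℂ} {y : ℂ}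
    (hx₀ : DifferentiableAt ℂ x₀ y) (hα : DifferentiableAt ℂ α y)
    (hut : DifferentiableAt ℂ (fun x => ut (x, y)) (x₀ y))
    (hψt : ∀ᶠ q in 𝓝 (x₀ y, y), DifferentiableAt ℂ ψt q)
    (heq : ∀ᶠ x in 𝓝[≠] x₀ y,
      pdy (psiPole x₀ α ψt) (x, y) - pdx (pdx (psiPole x₀ α ψt)) (x, y)
        + uPole x₀ ut (x, y) * psiPole x₀ α ψt (x, y) = 0) :
    α y * deriv x₀ y + 2 * ψt (x₀ y, y) = 0 ∧
    deriv α y + α y * ut (x₀ y, y) + 2 * pdx ψt (x₀ y, y) = 0 ∧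
    deriv (fun y' => ψt (x₀ y', y')) y + ut (x₀ y, y) * ψt (x₀ y, y)
      - pdx ψt (x₀ y, y) * deriv x₀ y + α y * pdx ut (x₀ y, y) = 0 := by
  have hline : ∀ᶠ x in 𝓝 (x₀ y), DifferentiableAt ℂ ψt (x, y) :=
    (Continuous.prodMk_left y).continuousAt.eventually hψt
  have hψt_x : AnalyticAt ℂ (fun x => ψt (x, y)) (x₀ y) :=
    Complex.analyticAt_iff_eventually_differentiableAt.2 <|
      hline.mono fun x hx => hx.comp x (f := fun x => (x, y)) (by fun_prop)
  have hψt_y : ∀ᶠ q in 𝓝 (x₀ y, y), DifferentiableAt ℂ (fun z => ψt (q.1, z)) q.2 :=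
    hψt.mono fun q hq => hq.comp q.2 (f := fun z => (q.1, z)) (by fun_prop)
  have hpdy : ContinuousAt (fun x => pdy ψt (x, y)) (x₀ y) :=
    continuousAt_deriv_of_eventually_differentiableAt
      (hψt.mono fun _ hq => hq.continuousAt) hψt_y
  obtain ⟨h₀, h₁, h₂⟩ := coefficients_of_pole_equation (A := α y) (B := deriv α y)
    (C := α y * deriv x₀ y) hψt_x hut hpdy (by
      filter_upwards [heq, nhdsWithin_le_nhds
        ((Continuous.prodMk_left y).continuousAt.eventually hψt_y), self_mem_nhdsWithin]
        with x hx hψx hne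
      rw [pdy_psiPole hx₀ hα hψx hne] at hx
      exact hx)
  refine ⟨h₀, h₁, ?_⟩
  rw [deriv_comp_graph hx₀ hψt.self_of_nhds]
  simp only [pdx] at h₂ ⊢
  linear_combination h₂

/-- equations (3.6)–(3.8) of the paper: if
`ψ = α(y)/(x−x₀(y)) + ψ̃` with `u = 2/(x−x₀(y))² + ũ` solves
`∂_yψ − ∂_x²ψ + uψ = 0` away from the pole, then with
`v = ũ(x₀(y),y)`, `w = ∂_xũ(x₀(y),y)`, `β = ψ̃(x₀(y),y)`, `γ = ∂_xψ̃(x₀(y),y)`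
one has `α ẋ₀ + 2β = 0`, `α̇ + αv + 2γ = 0`, `β̇ + vβ − γẋ₀ + αw = 0`. -/
theorem stmt_6 (D : Set ℂ) (hD : IsOpen D)
    (x₀ α : ℂ → ℂ) (hx₀ : DifferentiableOn ℂ x₀ D) (hα : DifferentiableOn ℂ α D)
    (Ω : Set (ℂ × ℂ)) (hΩ : IsOpen Ω)
    (hgraph : ∀ y ∈ D, ((x₀ y, y) : ℂ × ℂ) ∈ Ω)
    (ut ψt : ℂ × ℂ → ℂ)
    (hut : DifferentiableOn ℂ ut Ω) (hψt : DifferentiableOn ℂ ψt Ω)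
    (heq : ∀ q ∈ Ω, q.2 ∈ D → q.1 ≠ x₀ q.2 →
      pdy (psiPole x₀ α ψt) q - pdx (pdx (psiPole x₀ α ψt)) q
        + uPole x₀ ut q * psiPole x₀ α ψt q = 0) :
    ∀ y ∈ D,
      α y * deriv x₀ y + 2 * ψt (x₀ y, y) = 0 ∧
      deriv α y + α y * ut (x₀ y, y) + 2 * pdx ψt (x₀ y, y) = 0 ∧
      deriv (fun y' => ψt (x₀ y', y')) y + ut (x₀ y, y) * ψt (x₀ y, y)
        - pdx ψt (x₀ y, y) * deriv x₀ y + α y * pdx ut (x₀ y, y) = 0 := by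
  intro y hy
  have hΩy := hΩ.mem_nhds (hgraph y hy)
  have hline : ∀ᶠ x in 𝓝 (x₀ y), (x, y) ∈ Ω := (Continuous.prodMk_left y).continuousAt hΩy
  refine stmt_6_general (hx₀.differentiableAt (hD.mem_nhds hy))
    (hα.differentiableAt (hD.mem_nhds hy)) ?_ (hψt.eventually_differentiableAt hΩy) ?_
  · exact (hut.differentiableAt hΩy).comp (x₀ y) (f := fun x => (x, y)) (by fun_prop)
  · filter_upwards [nhdsWithin_le_nhds hline, self_mem_nhdsWithin] with x hx hne
      using heq (x, y) hx hy hne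
end

section
/- Let D ⊆ ℂ be open, let x₀, r : D → ℂ be holomorphic, let Ω ⊆ ℂ² be an open set containing the graph {(x₀(y), y) : y ∈ D}, let η, ũ : Ω → ℂ be holomorphic, and let b ∈ ℂ. For (x,y) ∈ Ω with x ≠ x₀(y), define ξ(x,y) := r(y)/(x − x₀(y)) + η(x,y), u(x,y) := 2/(x − x₀(y))² + ũ(x,y), and F := ∂_yξ + (u+b)ξ − ∂_x²ξ. Then the function F(x,y) − (r(y)x₀'(y) + 2η(x₀(y),y))/(x − x₀(y))² − (r'(y) + (ũ(x₀(y),y)+b)r(y) + 2∂_xη(x₀(y),y))/(x − x₀(y)) extends holomorphically across x = x₀(y). In particular, F has at most a double pole at x = x₀(y) (the third-order pole cancels), and its residue there equals r'(y) + (ũ(x₀(y),y)+b)r(y) + 2∂_xη(x₀(y),y). -/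
/-- `ξ(x,y) = r(y)/(x − x₀(y)) + η(x,y)`. -/
noncomputable def xiPole (x₀ r : ℂ → ℂ) (η : ℂ × ℂ → ℂ) : ℂ × ℂ → ℂ :=
  fun q => r q.2 / (q.1 - x₀ q.2) + η q

/-- `F = ∂_yξ + (u+b)ξ − ∂_x²ξ`, the right-hand side of the recursion
`2∂_xξ_{s+1} = ∂_yξ_s + (u+b)ξ_s − ∂_x²ξ_s`. -/
noncomputable def Frec (x₀ r : ℂ → ℂ) (η ut : ℂ × ℂ → ℂ) (b : ℂ) : ℂ × ℂ → ℂ :=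
  fun q => pdy (xiPole x₀ r η) q + (uPole x₀ ut q + b) * xiPole x₀ r η q
    - pdx (pdx (xiPole x₀ r η)) q

/-!
By the Cauchy integral formula, a function of `(x, w)` that is holomorphic off a graph `x = c w` and
holomorphic in `x` on each slice is jointly holomorphic. Hence divided differences in `x` based at
the graph, and therefore partial derivatives, of jointly holomorphic functions are jointly
holomorphic.

With `d = x - x₀(y)`, the terms of order `d⁻³` in `uξ` and `∂ₓ²ξ` are both `2r/d³` and cancel. The
remaining poles are read off from `η = η₀ + d ∂ₓη₀ + d² S` and `ũ = ũ₀ + d T`, where the subscript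
`0` means the value at `x = x₀(y)` and the remainders `S`, `T` are iterated divided differences.
-/

open Filter Metric MeasureTheory Set
open scoped Interval Topology Real

section HolomorphicParameter

variable {X E F : Type*} [TopologicalSpace X] [NormedAddCommGroup E] [NormedSpace ℂ E]
  [ProperSpace E] [NormedAddCommGroup F] [NormedSpace ℂ F]

-- On a compact ball `K t` is uniformly close to `K t₀`, and the Schwarz lemma turns this into
-- closeness of the derivatives at the centre.
theorem continuousOn_fderiv_of_continuousOn_uncurry {K : X → E → F} {s : Set X} {U : Set E}
    (hU : IsOpen U) (hK : ContinuousOn K.uncurry (s ×ˢ U))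
    (hd : ∀ t ∈ s, DifferentiableOn ℂ (K t) U) {p : E} (hp : p ∈ U) :
    ContinuousOn (fun t => fderiv ℂ (K t) p) s := by
  intro t₀ ht₀
  obtain ⟨ρ, hρ, hball⟩ := nhds_basis_closedBall.mem_iff.1 (hU.mem_nhds hp)
  refine Metric.tendsto_nhds.2 fun ε hε => ?_
  have hδ : 0 < ε * ρ / 4 := by positivity
  obtain ⟨v, hv, hclose⟩ := (isCompact_closedBall p ρ).mem_uniformity_of_prod
    (hK.mono (prod_mono_right hball)) ht₀ (dist_mem_uniformity hδ)
  filter_upwards [hv, self_mem_nhdsWithin] with t htv ht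
  have hdiff : ∀ z ∈ closedBall p ρ, ‖K t z - K t₀ z‖ < ε * ρ / 4 := fun z hz => by
    simpa [dist_eq_norm] using hclose t htv z hz
  have hmaps : MapsTo (K t - K t₀) (ball p ρ) (closedBall ((K t - K t₀) p) (ε * ρ / 2)) := by
    intro z hz
    rw [mem_closedBall, dist_eq_norm, Pi.sub_apply, Pi.sub_apply]
    linarith [norm_sub_le (K t z - K t₀ z) (K t p - K t₀ p), hdiff z (ball_subset_closedBall hz),
      hdiff p (mem_closedBall_self hρ.le)]
  have hat : ∀ τ ∈ s, DifferentiableAt ℂ (K τ) p := fun τ hτ =>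
    (hd τ hτ).differentiableAt (hU.mem_nhds hp)
  calc dist (fderiv ℂ (K t) p) (fderiv ℂ (K t₀) p)
      = ‖fderiv ℂ (K t - K t₀) p‖ := by rw [dist_eq_norm, fderiv_sub (hat t ht) (hat t₀ ht₀)]
    _ ≤ ε * ρ / 2 / ρ := Complex.norm_fderiv_le_div_of_mapsTo_ball
        (((hd t ht).sub (hd t₀ ht₀)).mono (ball_subset_closedBall.trans hball)) hmaps hρ
    _ < ε := by rw [mul_div_right_comm, mul_div_cancel_right₀ _ hρ.ne']; exact half_lt_self hε

theorem exists_eventually_norm_fderiv_le_of_continuousOn_uncurry {K : X → E → F} {s : Set X}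
    {U : Set E} (hs : IsCompact s) (hU : IsOpen U) (hK : ContinuousOn K.uncurry (s ×ˢ U))
    (hd : ∀ t ∈ s, DifferentiableOn ℂ (K t) U) {p : E} (hp : p ∈ U) :
    ∃ C, ∀ᶠ w in 𝓝 p, ∀ t ∈ s, ‖fderiv ℂ (K t) w‖ ≤ C := by
  obtain ⟨ρ, hρ, hball⟩ := nhds_basis_closedBall.mem_iff.1 (hU.mem_nhds hp)
  obtain ⟨M, hM⟩ := (hs.prod (isCompact_closedBall p ρ)).exists_bound_of_continuousOn
    (hK.mono (prod_mono_right hball))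
  refine ⟨2 * M / (ρ / 2), ?_⟩
  filter_upwards [ball_mem_nhds p (half_pos hρ)] with w hw t ht
  have hsub : ball w (ρ / 2) ⊆ closedBall p ρ :=
    (ball_subset_ball' (by linarith [mem_ball.1 hw])).trans ball_subset_closedBall
  refine Complex.norm_fderiv_le_div_of_mapsTo_ball ((hd t ht).mono (hsub.trans hball))
    (fun z hz => ?_) (half_pos hρ)
  have hz' : ‖K t z‖ ≤ M := hM (t, z) ⟨ht, hsub hz⟩
  have hw' : ‖K t w‖ ≤ M := hM (t, w) ⟨ht, hsub (mem_ball_self (half_pos hρ))⟩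
  rw [mem_closedBall, dist_eq_norm]
  linarith [norm_sub_le (K t z) (K t w)]

theorem differentiableOn_intervalIntegral_of_continuousOn_uncurry {K : ℝ → E → F} {a b : ℝ}
    {U : Set E} (hU : IsOpen U) (hK : ContinuousOn K.uncurry ([[a, b]] ×ˢ U))
    (hd : ∀ t ∈ [[a, b]], DifferentiableOn ℂ (K t) U) :
    DifferentiableOn ℂ (fun w => ∫ t in a..b, K t w) U := by
  intro p hp
  have hcont : ∀ w ∈ U, ContinuousOn (fun t => K t w) [[a, b]] := fun w hw =>
    hK.comp (f := fun t => (t, w)) (by fun_prop) fun t ht => ⟨ht, hw⟩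
  obtain ⟨C, hC⟩ :=
    exists_eventually_norm_fderiv_le_of_continuousOn_uncurry isCompact_uIcc hU hK hd hp
  refine (intervalIntegral.hasFDerivAt_integral_of_dominated_of_fderiv_le
    (F' := fun w t => fderiv ℂ (K t) w) (bound := fun _ => C) (inter_mem hC (hU.mem_nhds hp))
    ?_ (hcont p hp).intervalIntegrable ?_ ?_ intervalIntegrable_const
    ?_).differentiableAt.differentiableWithinAt
  · filter_upwards [hU.mem_nhds hp] with w hw
    exact ((hcont w hw).mono uIoc_subset_uIcc).aestronglyMeasurable measurableSet_uIoc
  · exact ((continuousOn_fderiv_of_continuousOn_uncurry hU hK hd hp).mono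
      uIoc_subset_uIcc).aestronglyMeasurable measurableSet_uIoc
  · exact .of_forall fun t ht w hw => hw.1 t (uIoc_subset_uIcc ht)
  · exact .of_forall fun t ht w hw =>
      ((hd t (uIoc_subset_uIcc ht)).differentiableAt (hU.mem_nhds hw.2)).hasFDerivAt

theorem differentiableOn_circleIntegral_of_continuousOn_uncurry {K : ℂ → E → F} {c : ℂ} {R : ℝ}
    (hR : 0 ≤ R) {U : Set E} (hU : IsOpen U) (hK : ContinuousOn K.uncurry (sphere c R ×ˢ U))
    (hd : ∀ z ∈ sphere c R, DifferentiableOn ℂ (K z) U) :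
    DifferentiableOn ℂ (fun w => ∮ z in C(c, R), K z w) U := by
  refine differentiableOn_intervalIntegral_of_continuousOn_uncurry
    (K := fun t w => deriv (circleMap c R) t • K (circleMap c R t) w) hU ?_
    fun t _ => (hd _ (circleMap_mem_sphere c hR t)).const_smul _
  have hKcircle : ContinuousOn (fun q : ℝ × E => K (circleMap c R q.1) q.2)
      ([[0, 2 * π]] ×ˢ U) :=
    hK.comp (f := fun q : ℝ × E => (circleMap c R q.1, q.2)) (by fun_prop)
      fun q hq => ⟨circleMap_mem_sphere c hR q.1, hq.2⟩
  simp only [Function.uncurry_def, deriv_circleMap]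
  exact ContinuousOn.smul (by fun_prop) hKcircle

end HolomorphicParameter

section Extension

variable {E F : Type*} [NormedAddCommGroup E] [NormedSpace ℂ E] [ProperSpace E]
  [NormedAddCommGroup F] [NormedSpace ℂ F] [CompleteSpace F]

theorem differentiableOn_ball_prod_of_differentiableOn_sphere_prod {f : ℂ × E → F} {c : ℂ}
    {R : ℝ} {W : Set E} (hW : IsOpen W) (hsphere : DifferentiableOn ℂ f (sphere c R ×ˢ W))
    (hslice : ∀ w ∈ W, DifferentiableOn ℂ (fun z => f (z, w)) (closedBall c R)) :
    DifferentiableOn ℂ f (ball c R ×ˢ W) := by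
  rcases le_or_gt R 0 with hR | hR
  · simp [ball_eq_empty.2 hR, differentiableOn_empty]
  have hne : ∀ z ∈ sphere c R, ∀ x ∈ ball c R, z - x ≠ 0 := by
    rintro z hz x hx h
    rw [sub_eq_zero.1 h] at hz
    exact (mem_ball.1 hx).ne hz
  have hcauchy : EqOn f
      (fun q => (2 * π * Complex.I : ℂ)⁻¹ • ∮ z in C(c, R), (z - q.1)⁻¹ • f (z, q.2))
      (ball c R ×ˢ W) := fun q hq => by
    beta_reduce
    rw [(hslice q.2 hq.2).circleIntegral_sub_inv_smul hq.1,
      inv_smul_smul₀ Complex.two_pi_I_ne_zero]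
  refine DifferentiableOn.congr (.const_smul ?_ _) hcauchy
  refine differentiableOn_circleIntegral_of_continuousOn_uncurry
    (K := fun z (q : ℂ × E) => (z - q.1)⁻¹ • f (z, q.2)) hR.le (isOpen_ball.prod hW) ?_ ?_
  · refine ContinuousOn.smul (ContinuousOn.inv₀ (by fun_prop) fun q hq => ?_) ?_
    · exact hne q.1 hq.1 q.2.1 hq.2.1
    · exact hsphere.continuousOn.comp (f := fun q : ℂ × ℂ × E => (q.1, q.2.2)) (by fun_prop)
        fun q hq => ⟨hq.1, hq.2.2⟩
  · intro z hz
    refine DifferentiableOn.smul (DifferentiableOn.inv (by fun_prop) fun q hq => ?_) ?_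
    · exact hne z hz q.1 hq.1
    · exact hsphere.comp (f := fun q : ℂ × E => (z, q.2)) (by fun_prop) fun q hq => ⟨hz, hq.2⟩

theorem differentiableOn_of_differentiableOn_off_graph {f : ℂ × E → F} {U : Set (ℂ × E)}
    (hU : IsOpen U) {c : E → ℂ} (hc : ContinuousOn c (Prod.snd '' U))
    (hoff : DifferentiableOn ℂ f (U ∩ {q | q.1 ≠ c q.2}))
    (hslice : ∀ w, DifferentiableOn ℂ (fun z => f (z, w)) {z | (z, w) ∈ U}) :
    DifferentiableOn ℂ f U := by
  have hcsnd : ContinuousOn (fun q : ℂ × E => c q.2) U :=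
    hc.comp continuousOn_snd (mapsTo_image _ _)
  intro q hq
  by_cases hqc : q.1 = c q.2
  · obtain ⟨R, hR, hball⟩ := nhds_basis_closedBall.mem_iff.1 (hU.mem_nhds hq)
    replace hball : closedBall q.1 R ×ˢ closedBall q.2 R ⊆ U := by rwa [closedBall_prod_same]
    have hsnd : ball q.2 R ⊆ Prod.snd '' U := fun w hw =>
      ⟨(q.1, w), hball ⟨mem_closedBall_self hR.le, ball_subset_closedBall hw⟩, rfl⟩
    let W : Set E := ball q.2 R ∩ c ⁻¹' ball q.1 R
    have hW : IsOpen W := (hc.mono hsnd).isOpen_inter_preimage isOpen_ball isOpen_ball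
    have hWU : closedBall q.1 R ×ˢ W ⊆ U := fun p hp =>
      hball ⟨hp.1, ball_subset_closedBall hp.2.1⟩
    have hqW : q ∈ ball q.1 R ×ˢ W :=
      ⟨mem_ball_self hR, mem_ball_self hR, by simpa [← hqc] using hR⟩
    have hsphere : DifferentiableOn ℂ f (sphere q.1 R ×ˢ W) := by
      refine hoff.mono fun p hp => ⟨hWU ⟨sphere_subset_closedBall hp.1, hp.2⟩, fun hpc => ?_⟩
      exact (mem_ball.1 hp.2.2).ne (hpc ▸ hp.1)
    exact ((differentiableOn_ball_prod_of_differentiableOn_sphere_prod hW hsphere fun w hw =>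
      (hslice w).mono fun z hz => hWU ⟨hz, hw⟩).differentiableAt
        ((isOpen_ball.prod hW).mem_nhds hqW)).differentiableWithinAt
  · have hne : ∀ᶠ p in 𝓝 q, p.1 ≠ c p.2 :=
      (continuousAt_fst.ne_iff_eventually_ne (hcsnd.continuousAt (hU.mem_nhds hq))).1 hqc
    exact (hoff.differentiableAt (inter_mem (hU.mem_nhds hq) hne)).differentiableWithinAt

end Extension

section DividedDifference

/-- The divided difference `(f (x, w) - f (c w, w)) / (x - c w)` of `f` in its first variable, based
at the graph `x = c w`; on the graph its value is the partial derivative of `f` in `x`. -/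
noncomputable def dslopeAlong {E F : Type*} [NormedAddCommGroup F] [NormedSpace ℂ F] (c : E → ℂ)
    (f : ℂ × E → F) : ℂ × E → F :=
  fun q => dslope (fun x => f (x, q.2)) (c q.2) q.1

variable {E F : Type*} [NormedAddCommGroup F] [NormedSpace ℂ F]

theorem dslopeAlong_graph (c : E → ℂ) (f : ℂ × E → F) (w : E) :
    dslopeAlong c f (c w, w) = deriv (fun x => f (x, w)) (c w) :=
  dslope_same _ _

theorem sub_smul_dslopeAlong (c : E → ℂ) (f : ℂ × E → F) (q : ℂ × E) :
    (q.1 - c q.2) • dslopeAlong c f q = f q - f (c q.2, q.2) :=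
  sub_smul_dslope (fun x => f (x, q.2)) (c q.2) q.1

theorem eq_add_deriv_add_sq_smul_dslopeAlong (c : E → ℂ) (f : ℂ × E → F) (q : ℂ × E) :
    f q = f (c q.2, q.2) + (q.1 - c q.2) • deriv (fun x => f (x, q.2)) (c q.2) +
      (q.1 - c q.2) ^ 2 • dslopeAlong c (dslopeAlong c f) q := by
  rw [pow_two, mul_smul, sub_smul_dslopeAlong, smul_sub, sub_smul_dslopeAlong, dslopeAlong_graph]
  abel

variable [NormedAddCommGroup E] [NormedSpace ℂ E] [ProperSpace E] [CompleteSpace F]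

theorem differentiableOn_dslopeAlong {f : ℂ × E → F} {U : Set (ℂ × E)} (hU : IsOpen U)
    (hf : DifferentiableOn ℂ f U) {c : E → ℂ} (hc : DifferentiableOn ℂ c (Prod.snd '' U))
    (hgraph : ∀ q ∈ U, (c q.2, q.2) ∈ U) : DifferentiableOn ℂ (dslopeAlong c f) U := by
  refine differentiableOn_of_differentiableOn_off_graph hU hc.continuousOn ?_ fun w z hz => ?_
  · have hcsnd : DifferentiableOn ℂ (fun q : ℂ × E => c q.2) U :=
      hc.comp differentiableOn_snd (mapsTo_image _ _)
    have hquot : DifferentiableOn ℂ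
        (fun q : ℂ × E => (q.1 - c q.2)⁻¹ • (f q - f (c q.2, q.2))) (U ∩ {q | q.1 ≠ c q.2}) :=
      (((differentiableOn_fst.sub hcsnd).mono inter_subset_left).inv
        fun q hq => sub_ne_zero.2 hq.2).smul
        ((hf.sub (hf.comp (hcsnd.prodMk differentiableOn_snd) hgraph)).mono inter_subset_left)
    refine hquot.congr fun q hq => ?_
    rw [← sub_smul_dslopeAlong c f, inv_smul_smul₀ (sub_ne_zero.2 hq.2)]
  · have hslice : {x | (x, w) ∈ U} ∈ 𝓝 (c w) :=
      (hU.preimage (Continuous.prodMk_left w)).mem_nhds (hgraph _ hz)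
    exact (Complex.differentiableOn_dslope hslice).2
      (hf.comp (f := fun x => (x, w)) (by fun_prop) fun x hx => hx) z hz

-- The partial derivative is the diagonal of the divided difference of `f (x, w)` between `x` and a
-- second point `x'`, with `(x', w)` as the parameter.
theorem differentiableOn_deriv_fst {f : ℂ × E → F} {U : Set (ℂ × E)} (hU : IsOpen U)
    (hf : DifferentiableOn ℂ f U) :
    DifferentiableOn ℂ (fun q : ℂ × E => deriv (fun x => f (x, q.2)) q.1) U := by
  let V : Set (ℂ × ℂ × E) := {q | (q.1, q.2.2) ∈ U ∧ q.2 ∈ U}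
  have hV : IsOpen V := (hU.preimage (by fun_prop)).inter (hU.preimage continuous_snd)
  have hfV : DifferentiableOn ℂ (fun q : ℂ × ℂ × E => f (q.1, q.2.2)) V :=
    hf.comp (by fun_prop) fun q hq => hq.1
  have hdslope := differentiableOn_dslopeAlong hV hfV differentiableOn_fst fun q hq => ⟨hq.2, hq.2⟩
  refine (hdslope.comp (f := fun q : ℂ × E => (q.1, q)) (by fun_prop) fun q hq => ⟨hq, hq⟩).congr
    fun q _ => ?_
  exact (dslopeAlong_graph Prod.fst (fun q : ℂ × ℂ × E => f (q.1, q.2.2)) q).symm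

end DividedDifference

section PartialDerivatives

variable {f : ℂ × ℂ → ℂ} {Ω : Set (ℂ × ℂ)} {q : ℂ × ℂ}

theorem differentiableOn_pdx (hΩ : IsOpen Ω) (hf : DifferentiableOn ℂ f Ω) :
    DifferentiableOn ℂ (pdx f) Ω :=
  differentiableOn_deriv_fst hΩ hf

theorem differentiableOn_pdy (hΩ : IsOpen Ω) (hf : DifferentiableOn ℂ f Ω) :
    DifferentiableOn ℂ (pdy f) Ω := by
  have hswap : Differentiable ℂ (Prod.swap : ℂ × ℂ → ℂ × ℂ) :=
    differentiable_snd.prodMk differentiable_fst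
  have hpdx : DifferentiableOn ℂ (pdx (f ∘ Prod.swap)) (Prod.swap ⁻¹' Ω) :=
    differentiableOn_pdx (hΩ.preimage continuous_swap)
      (hf.comp hswap.differentiableOn (mapsTo_preimage _ _))
  exact hpdx.comp hswap.differentiableOn fun _ hq => hq

theorem hasDerivAt_pdx (hf : DifferentiableAt ℂ f q) :
    HasDerivAt (fun x => f (x, q.2)) (pdx f q) q.1 :=
  (hf.comp q.1 (f := fun x => (x, q.2)) (by fun_prop)).hasDerivAt

theorem hasDerivAt_pdy (hf : DifferentiableAt ℂ f q) :
    HasDerivAt (fun y => f (q.1, y)) (pdy f q) q.2 :=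
  (hf.comp q.2 (f := fun y => (q.1, y)) (by fun_prop)).hasDerivAt

end PartialDerivatives

section SimplePole

variable {x₀ r : ℂ → ℂ} {η ut : ℂ × ℂ → ℂ} {Ω : Set (ℂ × ℂ)} {q : ℂ × ℂ}

theorem pdx_xiPole (hη : DifferentiableAt ℂ η q) (hq : q.1 ≠ x₀ q.2) :
    pdx (xiPole x₀ r η) q = -r q.2 / (q.1 - x₀ q.2) ^ 2 + pdx η q := by
  have hderiv := ((hasDerivAt_const q.1 (r q.2)).div ((hasDerivAt_id q.1).sub_const (x₀ q.2))
    (sub_ne_zero.2 hq)).add (hasDerivAt_pdx hη)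
  exact hderiv.deriv.trans (by simp)

theorem pdy_xiPole (hx₀ : DifferentiableAt ℂ x₀ q.2) (hr : DifferentiableAt ℂ r q.2)
    (hη : DifferentiableAt ℂ η q) (hq : q.1 ≠ x₀ q.2) :
    pdy (xiPole x₀ r η) q =
      deriv r q.2 / (q.1 - x₀ q.2) + r q.2 * deriv x₀ q.2 / (q.1 - x₀ q.2) ^ 2 + pdy η q := by
  have hsub := sub_ne_zero.2 hq
  have hderiv := (hr.hasDerivAt.div (hx₀.hasDerivAt.const_sub q.1) hsub).add (hasDerivAt_pdy hη)
  refine hderiv.deriv.trans ?_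
  field_simp
  ring

theorem pdx_pdx_xiPole (hΩ : IsOpen Ω) (hη : DifferentiableOn ℂ η Ω) (hqΩ : q ∈ Ω)
    (hq : q.1 ≠ x₀ q.2) :
    pdx (pdx (xiPole x₀ r η)) q = 2 * r q.2 / (q.1 - x₀ q.2) ^ 3 + pdx (pdx η) q := by
  have hsub := sub_ne_zero.2 hq
  have hpdx : (fun x => pdx (xiPole x₀ r η) (x, q.2)) =ᶠ[𝓝 q.1]
      fun x => -r q.2 / (x - x₀ q.2) ^ 2 + pdx η (x, q.2) := by
    have hslice : ∀ᶠ x in 𝓝 q.1, (x, q.2) ∈ Ω :=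
      (hΩ.preimage (Continuous.prodMk_left q.2)).mem_nhds hqΩ
    filter_upwards [hslice, isOpen_ne.mem_nhds hq] with x hxΩ hx
    exact pdx_xiPole (hη.differentiableAt (hΩ.mem_nhds hxΩ)) hx
  have hderiv := ((hasDerivAt_const q.1 (-r q.2)).div
    (((hasDerivAt_id q.1).sub_const (x₀ q.2)).pow 2) (pow_ne_zero 2 hsub)).add
    (hasDerivAt_pdx ((differentiableOn_pdx hΩ hη).differentiableAt (hΩ.mem_nhds hqΩ)))
  refine (hderiv.congr_of_eventuallyEq hpdx).deriv.trans ?_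
  simp only [id_eq, Pi.pow_apply, zero_mul, Nat.cast_ofNat, Nat.add_one_sub_one, pow_one, mul_one,
    neg_mul, sub_neg_eq_add, zero_add, add_left_inj]
  field_simp

/-- The holomorphic part of `Frec` at the pole `x = x₀(y)`. The two divided differences are the
Taylor remainders of `η` and `ũ` that survive division by `(x - x₀)²` and `x - x₀` in the products
`2η/(x - x₀)²` and `ũr/(x - x₀)`. -/
noncomputable def frecRegularPart (x₀ r : ℂ → ℂ) (η ut : ℂ × ℂ → ℂ) (b : ℂ) : ℂ × ℂ → ℂ :=
  fun q => pdy η q + (ut q + b) * η q - pdx (pdx η) q +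
    2 * dslopeAlong x₀ (dslopeAlong x₀ η) q + r q.2 * dslopeAlong x₀ ut q

theorem differentiableOn_frecRegularPart (hΩ : IsOpen Ω)
    (hx₀ : DifferentiableOn ℂ x₀ (Prod.snd '' Ω)) (hr : DifferentiableOn ℂ r (Prod.snd '' Ω))
    (hgraph : ∀ q ∈ Ω, (x₀ q.2, q.2) ∈ Ω) (hη : DifferentiableOn ℂ η Ω)
    (hut : DifferentiableOn ℂ ut Ω) (b : ℂ) :
    DifferentiableOn ℂ (frecRegularPart x₀ r η ut b) Ω := by
  have hdslope : ∀ {f : ℂ × ℂ → ℂ}, DifferentiableOn ℂ f Ω →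
      DifferentiableOn ℂ (dslopeAlong x₀ f) Ω :=
    fun hf => differentiableOn_dslopeAlong hΩ hf hx₀ hgraph
  have hrsnd : DifferentiableOn ℂ (fun q : ℂ × ℂ => r q.2) Ω :=
    hr.comp differentiableOn_snd (mapsTo_image _ _)
  exact ((((differentiableOn_pdy hΩ hη).add ((hut.add_const b).mul hη)).sub
    (differentiableOn_pdx hΩ (differentiableOn_pdx hΩ hη))).add
    ((hdslope (hdslope hη)).const_mul 2)).add (hrsnd.mul (hdslope hut))

theorem frec_eq_add_frecRegularPart (hx₀ : DifferentiableAt ℂ x₀ q.2)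
    (hr : DifferentiableAt ℂ r q.2) (hΩ : IsOpen Ω) (hη : DifferentiableOn ℂ η Ω) (hqΩ : q ∈ Ω)
    (b : ℂ) (hq : q.1 ≠ x₀ q.2) :
    Frec x₀ r η ut b q =
      (r q.2 * deriv x₀ q.2 + 2 * η (x₀ q.2, q.2)) / (q.1 - x₀ q.2) ^ 2 +
      (deriv r q.2 + (ut (x₀ q.2, q.2) + b) * r q.2 + 2 * pdx η (x₀ q.2, q.2)) / (q.1 - x₀ q.2) +
      frecRegularPart x₀ r η ut b q := by
  have hsub := sub_ne_zero.2 hq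
  have htriple_cancel :
      2 / (q.1 - x₀ q.2) ^ 2 * (r q.2 / (q.1 - x₀ q.2)) = 2 * r q.2 / (q.1 - x₀ q.2) ^ 3 := by
    field_simp
  have hη_pole : 2 / (q.1 - x₀ q.2) ^ 2 * η q = 2 * η (x₀ q.2, q.2) / (q.1 - x₀ q.2) ^ 2 +
      2 * pdx η (x₀ q.2, q.2) / (q.1 - x₀ q.2) + 2 * dslopeAlong x₀ (dslopeAlong x₀ η) q := by
    have htaylor : η q = η (x₀ q.2, q.2) + (q.1 - x₀ q.2) * pdx η (x₀ q.2, q.2) +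
        (q.1 - x₀ q.2) ^ 2 * dslopeAlong x₀ (dslopeAlong x₀ η) q :=
      eq_add_deriv_add_sq_smul_dslopeAlong x₀ η q
    rw [htaylor]
    field_simp
  have hut_pole : ut q * (r q.2 / (q.1 - x₀ q.2)) =
      ut (x₀ q.2, q.2) * r q.2 / (q.1 - x₀ q.2) + r q.2 * dslopeAlong x₀ ut q := by
    have hdslope : (q.1 - x₀ q.2) * dslopeAlong x₀ ut q = ut q - ut (x₀ q.2, q.2) :=
      sub_smul_dslopeAlong x₀ ut q
    field_simp
    linear_combination -r q.2 * hdslope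
  rw [Frec, pdy_xiPole hx₀ hr (hη.differentiableAt (hΩ.mem_nhds hqΩ)) hq,
    pdx_pdx_xiPole hΩ hη hqΩ hq, xiPole, uPole, frecRegularPart]
  linear_combination htriple_cancel + hη_pole + hut_pole

end SimplePole

/-- Laurent computation in Lemma 3.3 of the paper: for
`ξ = r(y)/(x−x₀(y)) + η` and `u = 2/(x−x₀(y))² + ũ`, the function
`F − (r x₀' + 2η(x₀,y))/(x−x₀)² − (r' + (ũ(x₀,y)+b)r + 2∂_xη(x₀,y))/(x−x₀)`
extends holomorphically across x = x₀(y): F has at most a double pole, with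
the indicated double-pole coefficient and residue. -/
theorem stmt_9 (D : Set ℂ) (hD : IsOpen D)
    (x₀ r : ℂ → ℂ) (hx₀ : DifferentiableOn ℂ x₀ D) (hr : DifferentiableOn ℂ r D)
    (Ω : Set (ℂ × ℂ)) (hΩ : IsOpen Ω)
    (hgraph : ∀ y ∈ D, ((x₀ y, y) : ℂ × ℂ) ∈ Ω)
    (η ut : ℂ × ℂ → ℂ)
    (hη : DifferentiableOn ℂ η Ω) (hut : DifferentiableOn ℂ ut Ω)
    (b : ℂ) :
    ∀ y ∈ D, ∃ (V : Set (ℂ × ℂ)) (G : ℂ × ℂ → ℂ),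
      V ∈ nhds ((x₀ y, y) : ℂ × ℂ) ∧
      (∀ q ∈ V, q ∈ Ω ∧ q.2 ∈ D) ∧
      DifferentiableOn ℂ G V ∧
      ∀ q ∈ V, q.1 ≠ x₀ q.2 →
        G q = Frec x₀ r η ut b q
          - (r q.2 * deriv x₀ q.2 + 2 * η (x₀ q.2, q.2)) / (q.1 - x₀ q.2) ^ 2
          - (deriv r q.2 + (ut (x₀ q.2, q.2) + b) * r q.2
              + 2 * pdx η (x₀ q.2, q.2)) / (q.1 - x₀ q.2) := by
  intro y hy
  let V : Set (ℂ × ℂ) := Ω ∩ Prod.snd ⁻¹' D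
  have hV : IsOpen V := hΩ.inter (hD.preimage continuous_snd)
  have hVΩ : V ⊆ Ω := inter_subset_left
  have hsnd : Prod.snd '' V ⊆ D := image_subset_iff.2 inter_subset_right
  refine ⟨V, frecRegularPart x₀ r η ut b, hV.mem_nhds ⟨hgraph y hy, hy⟩, fun q hq => hq, ?_, ?_⟩
  · exact differentiableOn_frecRegularPart hV (hx₀.mono hsnd) (hr.mono hsnd)
      (fun q hq => ⟨hgraph q.2 hq.2, hq.2⟩) (hη.mono hVΩ) (hut.mono hVΩ) b
  · intro q hq hne
    rw [frec_eq_add_frecRegularPart (hx₀.differentiableAt (hD.mem_nhds hq.2))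
      (hr.differentiableAt (hD.mem_nhds hq.2)) hΩ hη hq.1 b hne]
    ring
end

section
/- Let D ⊆ ℂ be open and let x, v, w, r, ρ₀, ρ₁ : D → ℂ be holomorphic (x twice differentiable, r and ρ₀ differentiable) functions of y. Define R(y) := −(x'(y) r(y) + 2ρ₀(y))/2 and R₁(y) := (ρ₀'(y) − x'(y)ρ₁(y) + w(y) r(y) + v(y) ρ₀(y))/2. Then R' + vR + 2R₁ = −(r/2)(x'' − 2w) − (x'/2)(r' + v r + 2ρ₁) identically on D. In particular, if x'' = 2w and r' + v r + 2ρ₁ = 0 on D, then R' + vR + 2R₁ = 0 on D. -/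
/-!
In `z = X - x(y)` write `ξ_s = r / z + ρ₀ + ρ₁ z + ⋯` and `u + b = 2 / z ^ 2 + v + w z + ⋯`.
In `2 ∂_X ξ_{s+1} = ∂_y ξ_s + (u + b) ξ_s - ∂_X ^ 2 ξ_s` the `z⁻³` terms cancel, the `z⁻²` and `z⁰`
terms determine the residue `R` and the linear coefficient `R₁` of `ξ_{s+1}`, and the `z⁻¹` term
`r' + v r + 2 ρ₁` is the obstruction to integrating in `X`. In the obstruction `R' + v R + 2 R₁`
at the next step the terms `ρ₀'` and `v ρ₀` cancel, leaving a combination of `x'' - 2 w` and the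
previous obstruction.
-/

/-- The residue `R` of `ξ_{s+1}` at a pole moving with velocity `p`, in terms of the residue `r` and
the constant term `ρ₀` of `ξ_s`. -/
def nextResidue {α K : Type*} [Field K] (p r ρ₀ : α → K) (y : α) : K :=
  -(p y * r y + 2 * ρ₀ y) / 2

section

variable {𝕜 K : Type*} [NontriviallyNormedField 𝕜] [NormedField K] [NormedAlgebra 𝕜 K]

/-- The coefficient `R₁` of `z` in `ξ_{s+1}`, in terms of the velocity `p` of the pole, the
coefficients `v`, `w` of the potential and the coefficients `r`, `ρ₀`, `ρ₁` of `ξ_s`. -/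
noncomputable def nextLinearCoeff (p v w r ρ₀ ρ₁ : 𝕜 → K) (y : 𝕜) : K :=
  (deriv ρ₀ y - p y * ρ₁ y + w y * r y + v y * ρ₀ y) / 2

/-- The coefficient of `z⁻¹` on the right-hand side of the recursion; its vanishing is the residue
condition under which the recursion has a meromorphic solution. -/
noncomputable def residueObstruction (v r ρ₁ : 𝕜 → K) (y : 𝕜) : K :=
  deriv r y + v y * r y + 2 * ρ₁ y

variable {p r ρ₀ : 𝕜 → K} {y : 𝕜}

theorem hasDerivAt_nextResidue {p' r' ρ₀' : K} (hp : HasDerivAt p p' y) (hr : HasDerivAt r r' y)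
    (hρ₀ : HasDerivAt ρ₀ ρ₀' y) :
    HasDerivAt (nextResidue p r ρ₀) (-(p' * r y + p y * r' + 2 * ρ₀') / 2) y :=
  ((hp.mul hr).add (hρ₀.const_mul 2)).neg.div_const 2

theorem residueObstruction_next [NeZero (2 : K)] (v w ρ₁ : 𝕜 → K) (hp : DifferentiableAt 𝕜 p y)
    (hr : DifferentiableAt 𝕜 r y) (hρ₀ : DifferentiableAt 𝕜 ρ₀ y) :
    residueObstruction v (nextResidue p r ρ₀) (nextLinearCoeff p v w r ρ₀ ρ₁) y =
      -(r y / 2) * (deriv p y - 2 * w y) - (p y / 2) * residueObstruction v r ρ₁ y := by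
  have hR : deriv (nextResidue p r ρ₀) y =
      -(deriv p y * r y + p y * deriv r y + 2 * deriv ρ₀ y) / 2 :=
    (hasDerivAt_nextResidue hp.hasDerivAt hr.hasDerivAt hρ₀.hasDerivAt).deriv
  simp only [residueObstruction, hR, nextResidue, nextLinearCoeff]
  field_simp
  ring

theorem stmt_10_general [NeZero (2 : K)] (v w ρ₁ : 𝕜 → K) (hp : DifferentiableAt 𝕜 p y)
    (hr : DifferentiableAt 𝕜 r y) (hρ₀ : DifferentiableAt 𝕜 ρ₀ y) :
    residueObstruction v (nextResidue p r ρ₀) (nextLinearCoeff p v w r ρ₀ ρ₁) y =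
        -(r y / 2) * (deriv p y - 2 * w y) - (p y / 2) * residueObstruction v r ρ₁ y ∧
      (deriv p y = 2 * w y → residueObstruction v r ρ₁ y = 0 →
        residueObstruction v (nextResidue p r ρ₀) (nextLinearCoeff p v w r ρ₀ ρ₁) y = 0) := by
  have identity := residueObstruction_next v w ρ₁ hp hr hρ₀
  refine ⟨identity, fun motion residue => ?_⟩
  rw [identity, motion, residue, sub_self, mul_zero, mul_zero, sub_zero]

end

/-- induction step in Lemma 3.3 of the paper: with
`R = −(x' r + 2ρ₀)/2` and `R₁ = (ρ₀' − x' ρ₁ + w r + v ρ₀)/2` one has the identity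
`R' + vR + 2R₁ = −(r/2)(x'' − 2w) − (x'/2)(r' + v r + 2ρ₁)`; in particular, if
`x'' = 2w` and `r' + v r + 2ρ₁ = 0` on D, then `R' + vR + 2R₁ = 0` on D. -/
theorem stmt_10 (D : Set ℂ) (hD : IsOpen D)
    (x v w r ρ₀ ρ₁ : ℂ → ℂ)
    (hx : DifferentiableOn ℂ x D) (hx' : DifferentiableOn ℂ (deriv x) D)
    (hv : DifferentiableOn ℂ v D) (hw : DifferentiableOn ℂ w D)
    (hr : DifferentiableOn ℂ r D) (hρ₀ : DifferentiableOn ℂ ρ₀ D)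
    (hρ₁ : DifferentiableOn ℂ ρ₁ D) :
    (∀ y ∈ D,
      deriv (fun y' => -(deriv x y' * r y' + 2 * ρ₀ y') / 2) y
        + v y * (-(deriv x y * r y + 2 * ρ₀ y) / 2)
        + 2 * ((deriv ρ₀ y - deriv x y * ρ₁ y + w y * r y + v y * ρ₀ y) / 2)
      = -(r y / 2) * (deriv (deriv x) y - 2 * w y)
        - (deriv x y / 2) * (deriv r y + v y * r y + 2 * ρ₁ y)) ∧
    ((∀ y ∈ D, deriv (deriv x) y = 2 * w y) →
     (∀ y ∈ D, deriv r y + v y * r y + 2 * ρ₁ y = 0) →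
     ∀ y ∈ D,
      deriv (fun y' => -(deriv x y' * r y' + 2 * ρ₀ y') / 2) y
        + v y * (-(deriv x y * r y + 2 * ρ₀ y) / 2)
        + 2 * ((deriv ρ₀ y - deriv x y * ρ₁ y + w y * r y + v y * ρ₀ y) / 2)
      = 0) := by
  have step (y : ℂ) (hy : y ∈ D) := stmt_10_general v w ρ₁ (hx'.differentiableAt (hD.mem_nhds hy))
    (hr.differentiableAt (hD.mem_nhds hy)) (hρ₀.differentiableAt (hD.mem_nhds hy))
  exact ⟨fun y hy => (step y hy).1,
    fun motion residue y hy => (step y hy).2 (motion y hy) (residue y hy)⟩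
end

section
/- Let U ⊆ ℂ be open, let σ : U → ℂ be holomorphic, and let g₂ ∈ ℂ satisfy 2σ''''σ − 8σ'''σ' + 6(σ'')² = g₂σ² on U. Fix α, β ∈ ℂ and z ∈ ℂ, and define τ(x,y,t) := e^{αxt + βy²}σ(x+z) for x + z ∈ U and (y,t) ∈ ℂ². Then (D_x⁴ − 4D_xD_t + 3D_y²)τ·τ = (g₂ − 8α + 12β)·e^{2(αxt+βy²)}·σ(x+z)². Consequently, τ satisfies the bilinear KP equation (D_x⁴ − 4D_xD_t + 3D_y²)τ·τ = 0 identically if and only if (g₂ + 12β − 8α)·σ(x+z)² = 0 for all admissible x. -/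
/-- Partial derivative in the first (x) variable of a function on ℂ³. -/
noncomputable def pd1 (f : ℂ × ℂ × ℂ → ℂ) : ℂ × ℂ × ℂ → ℂ :=
  fun q => deriv (fun x => f (x, q.2.1, q.2.2)) q.1

/-- Partial derivative in the second (y) variable of a function on ℂ³. -/
noncomputable def pd2 (f : ℂ × ℂ × ℂ → ℂ) : ℂ × ℂ × ℂ → ℂ :=
  fun q => deriv (fun y => f (q.1, y, q.2.2)) q.2.1

/-- Partial derivative in the third (t) variable of a function on ℂ³. -/
noncomputable def pd3 (f : ℂ × ℂ × ℂ → ℂ) : ℂ × ℂ × ℂ → ℂ :=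
  fun q => deriv (fun t => f (q.1, q.2.1, t)) q.2.2

/-- Hirota's bilinear operator
`D_x⁴ f·g = f_xxxx g − 4 f_xxx g_x + 6 f_xx g_xx − 4 f_x g_xxx + f g_xxxx`. -/
noncomputable def Dx4 (f g : ℂ × ℂ × ℂ → ℂ) : ℂ × ℂ × ℂ → ℂ :=
  fun q => pd1 (pd1 (pd1 (pd1 f))) q * g q - 4 * pd1 (pd1 (pd1 f)) q * pd1 g q
    + 6 * pd1 (pd1 f) q * pd1 (pd1 g) q - 4 * pd1 f q * pd1 (pd1 (pd1 g)) q
    + f q * pd1 (pd1 (pd1 (pd1 g))) q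

/-- Hirota's bilinear operator `D_xD_t f·g = f_xt g − f_x g_t − f_t g_x + f g_xt`. -/
noncomputable def DxDt (f g : ℂ × ℂ × ℂ → ℂ) : ℂ × ℂ × ℂ → ℂ :=
  fun q => pd1 (pd3 f) q * g q - pd1 f q * pd3 g q - pd3 f q * pd1 g q
    + f q * pd1 (pd3 g) q

/-- Hirota's bilinear operator `D_y² f·g = f_yy g − 2 f_y g_y + f g_yy`. -/
noncomputable def Dy2 (f g : ℂ × ℂ × ℂ → ℂ) : ℂ × ℂ × ℂ → ℂ :=
  fun q => pd2 (pd2 f) q * g q - 2 * pd2 f q * pd2 g q + f q * pd2 (pd2 g) q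

/-- The tau function `τ(x,y,t) = e^{αxt + βy²} σ(x+z)`. -/
noncomputable def tauKP (α β z : ℂ) (σ : ℂ → ℂ) : ℂ × ℂ × ℂ → ℂ :=
  fun q => Complex.exp (α * q.1 * q.2.2 + β * q.2.1 ^ 2) * σ (q.1 + z)

/-!
Hirota's operators are derivatives in `h`, at `h = 0`, of `f (q + h) g (q - h)`. For `τ = e^φ σ`
with `φ = αxt + βy²` quadratic, the part of `φ` that is odd in `h = (x', y', t')` cancels, leaving
`τ (q + h) τ (q - h) = e^{2φ(q)} e^{2(αx't' + βy'²)} σ(x + z + x') σ(x + z - x')`.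
Up to the factor `e^{2φ(q)}`, then, `D_x⁴ τ·τ` is `D⁴ σ·σ`, while `D_xD_t τ·τ` and `D_y² τ·τ` are
`2ασ²` and `4βσ²`.
-/

open Filter Topology

section OneVariable

variable {𝕜 𝔸 : Type*} [NontriviallyNormedField 𝕜] [NormedRing 𝔸] [NormedAlgebra 𝕜 𝔸]

/-- Hirota's bilinear derivative `Dⁿ f·g` in one variable, defined as the `n`-th derivative of
`s ↦ f (x + s) * g (x - s)` at `s = 0`; the operators `D_x⁴` and `D_y²` are instances along
coordinate lines. -/
noncomputable def hirotaDeriv (n : ℕ) (f g : 𝕜 → 𝔸) (x : 𝕜) : 𝔸 :=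
  iteratedDeriv n (fun s => f (x + s) * g (x - s)) 0

theorem hirotaDeriv_eq_sum {n : ℕ} {f g : 𝕜 → 𝔸} {x : 𝕜}
    (hf : ContDiffAt 𝕜 n f x) (hg : ContDiffAt 𝕜 n g x) :
    hirotaDeriv n f g x = ∑ k ∈ Finset.range (n + 1),
      n.choose k * iteratedDeriv k f x * ((-1 : 𝕜) ^ (n - k) • iteratedDeriv (n - k) g x) := by
  have hf' : ContDiffAt 𝕜 n (fun s => f (x + s)) 0 :=
    ContDiffAt.comp 0 (by simpa using hf) (by fun_prop)
  have hg' : ContDiffAt 𝕜 n (fun s => g (x - s)) 0 :=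
    ContDiffAt.comp 0 (by simpa using hg) (by fun_prop)
  simpa only [hirotaDeriv, Pi.mul_def, iteratedDeriv_comp_const_add, iteratedDeriv_comp_const_sub,
    add_zero, sub_zero] using iteratedDeriv_mul hf' hg'

theorem hasDerivAt_add_mul_sub {f g : 𝕜 → 𝔸} {f' g' : 𝔸} {x : 𝕜}
    (hf : HasDerivAt f f' x) (hg : HasDerivAt g g' x) :
    HasDerivAt (fun s => f (x + s) * g (x - s)) (f' * g x - f x * g') 0 := by
  have hf₀ : HasDerivAt (fun s => f (x + s)) f' 0 :=
    HasDerivAt.comp_const_add x 0 (by simpa using hf)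
  have hg₀ : HasDerivAt (fun s => g (x - s)) (-g') 0 :=
    HasDerivAt.comp_const_sub x 0 (by simpa using hg)
  simpa [sub_eq_add_neg] using hf₀.fun_mul hg₀

theorem hasDerivAt_id_smul_zero {F : Type*} [NormedAddCommGroup F] [NormedSpace 𝕜 F] {f : 𝕜 → F}
    (hf : ContinuousAt f 0) : HasDerivAt (fun s => s • f s) (f 0) 0 := by
  refine hasDerivAt_iff_tendsto_slope_zero.2 ((hf.tendsto.mono_left nhdsWithin_le_nhds).congr' ?_)
  filter_upwards [self_mem_nhdsWithin] with s hs
  rw [zero_add, zero_smul, sub_zero, inv_smul_smul₀ hs]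

end OneVariable

section Expansions

variable {𝕜 𝔸 : Type*} [NontriviallyNormedField 𝕜] [NormedCommRing 𝔸] [NormedAlgebra 𝕜 𝔸]
  {f g : 𝕜 → 𝔸} {x : 𝕜}

theorem hirotaDeriv_two (hf : ContDiffAt 𝕜 2 f x) (hg : ContDiffAt 𝕜 2 g x) :
    hirotaDeriv 2 f g x =
      deriv (deriv f) x * g x - 2 * deriv f x * deriv g x + f x * deriv (deriv g) x := by
  rw [hirotaDeriv_eq_sum hf hg]
  simp only [Finset.sum_range_succ, Finset.sum_range_zero, iteratedDeriv_succ, iteratedDeriv_zero,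
    Nat.choose, Nat.reduceAdd, Nat.reduceSub, Nat.cast_ofNat, Nat.cast_one, pow_succ, pow_zero,
    mul_neg, mul_one, neg_neg, neg_smul, one_smul]
  ring

theorem hirotaDeriv_four (hf : ContDiffAt 𝕜 4 f x) (hg : ContDiffAt 𝕜 4 g x) :
    hirotaDeriv 4 f g x =
      deriv (deriv (deriv (deriv f))) x * g x - 4 * deriv (deriv (deriv f)) x * deriv g x
        + 6 * deriv (deriv f) x * deriv (deriv g) x - 4 * deriv f x * deriv (deriv (deriv g)) x
        + f x * deriv (deriv (deriv (deriv g))) x := by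
  rw [hirotaDeriv_eq_sum hf hg]
  simp only [Finset.sum_range_succ, Finset.sum_range_zero, iteratedDeriv_succ, iteratedDeriv_zero,
    Nat.choose, Nat.reduceAdd, Nat.reduceSub, Nat.cast_ofNat, Nat.cast_one, pow_succ, pow_zero,
    mul_neg, mul_one, neg_neg, neg_smul, one_smul]
  ring

end Expansions

theorem iteratedDeriv_two_cexp_mul_sq_zero (c : ℂ) :
    iteratedDeriv 2 (fun s => Complex.exp (c * s ^ 2)) 0 = 2 * c := by
  have hderiv : deriv (fun s => Complex.exp (c * s ^ 2)) =
      fun s => s • (2 * c * Complex.exp (c * s ^ 2)) := by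
    ext s
    have hsq : HasDerivAt (fun s => c * s ^ 2) (c * (2 * s)) s := by
      simpa using (hasDerivAt_pow 2 s).const_mul c
    rw [hsq.cexp.deriv, smul_eq_mul]
    ring
  rw [iteratedDeriv_succ, iteratedDeriv_one, hderiv,
    (hasDerivAt_id_smul_zero (by fun_prop)).deriv]
  simp

section PartialDerivatives

variable {f g : ℂ × ℂ × ℂ → ℂ} {x y t : ℂ}

theorem hasDerivAt_pd1 (hf : DifferentiableAt ℂ f (x, y, t)) :
    HasDerivAt (fun x' => f (x', y, t)) (pd1 f (x, y, t)) x :=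
  DifferentiableAt.hasDerivAt (by fun_prop)

theorem hasDerivAt_pd3 (hf : DifferentiableAt ℂ f (x, y, t)) :
    HasDerivAt (fun t' => f (x, y, t')) (pd3 f (x, y, t)) t :=
  DifferentiableAt.hasDerivAt (by fun_prop)

theorem pd3_eq_fderiv {q : ℂ × ℂ × ℂ} (hf : DifferentiableAt ℂ f q) :
    pd3 f q = fderiv ℂ f q (0, 0, 1) := by
  have hline : HasDerivAt (fun t => (q.1, q.2.1, t)) ((0, 0, 1) : ℂ × ℂ × ℂ) q.2.2 :=
    (hasDerivAt_const _ _).prodMk ((hasDerivAt_const _ _).prodMk (hasDerivAt_id _))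
  exact (hf.hasFDerivAt.comp_hasDerivAt q.2.2 hline).deriv

theorem differentiableAt_pd3 {q : ℂ × ℂ × ℂ} (hf : ContDiffAt ℂ 2 f q) :
    DifferentiableAt ℂ (pd3 f) q := by
  have hfderiv : DifferentiableAt ℂ (fun p => fderiv ℂ f p (0, 0, 1)) q :=
    ((hf.fderiv_right (m := 1) (by norm_num)).differentiableAt one_ne_zero).clm_apply
      (differentiableAt_const _)
  refine hfderiv.congr_of_eventuallyEq ?_
  filter_upwards [hf.eventually (by simp)] with p hp
  exact pd3_eq_fderiv (hp.differentiableAt two_ne_zero)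

theorem Dx4_eq_hirotaDeriv (hf : ContDiffAt ℂ 4 (fun x => f (x, y, t)) x)
    (hg : ContDiffAt ℂ 4 (fun x => g (x, y, t)) x) :
    Dx4 f g (x, y, t) = hirotaDeriv 4 (fun x => f (x, y, t)) (fun x => g (x, y, t)) x := by
  rw [hirotaDeriv_four hf hg]
  simp only [Dx4, pd1]

theorem Dy2_eq_hirotaDeriv (hf : ContDiffAt ℂ 2 (fun y => f (x, y, t)) y)
    (hg : ContDiffAt ℂ 2 (fun y => g (x, y, t)) y) :
    Dy2 f g (x, y, t) = hirotaDeriv 2 (fun y => f (x, y, t)) (fun y => g (x, y, t)) y := by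
  rw [hirotaDeriv_two hf hg]
  simp only [Dy2, pd2]

theorem DxDt_eq_deriv_deriv (hf : ContDiffAt ℂ 2 f (x, y, t)) (hg : ContDiffAt ℂ 2 g (x, y, t)) :
    DxDt f g (x, y, t) =
      deriv (fun r => deriv (fun s => f (x + r, y, t + s) * g (x - r, y, t - s)) 0) 0 := by
  have hinner : (fun r => deriv (fun s => f (x + r, y, t + s) * g (x - r, y, t - s)) 0) =ᶠ[𝓝 0]
      fun r => pd3 f (x + r, y, t) * g (x - r, y, t) - f (x + r, y, t) * pd3 g (x - r, y, t) := by
    have hf_line : Tendsto (fun r => (x + r, y, t)) (𝓝 0) (𝓝 (x, y, t)) :=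
      Continuous.tendsto' (by fun_prop) _ _ (by simp)
    have hg_line : Tendsto (fun r => (x - r, y, t)) (𝓝 0) (𝓝 (x, y, t)) :=
      Continuous.tendsto' (by fun_prop) _ _ (by simp)
    filter_upwards [hf_line.eventually (hf.eventually (by simp)),
      hg_line.eventually (hg.eventually (by simp))] with r hfr hgr
    exact (hasDerivAt_add_mul_sub (hasDerivAt_pd3 (hfr.differentiableAt two_ne_zero))
      (hasDerivAt_pd3 (hgr.differentiableAt two_ne_zero))).deriv
  have hf_x := hasDerivAt_pd1 (hf.differentiableAt two_ne_zero)
  have hg_x := hasDerivAt_pd1 (hg.differentiableAt two_ne_zero)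
  have hf_tx := hasDerivAt_pd1 (differentiableAt_pd3 hf)
  have hg_tx := hasDerivAt_pd1 (differentiableAt_pd3 hg)
  rw [hinner.deriv_eq,
    ((hasDerivAt_add_mul_sub hf_tx hg_x).fun_sub (hasDerivAt_add_mul_sub hf_x hg_tx)).deriv, DxDt]
  ring

end PartialDerivatives

section TauFunction

variable {σ : ℂ → ℂ} {x z : ℂ}

theorem contDiffAt_tauKP {n : WithTop ℕ∞} (hσ : ContDiffAt ℂ n σ (x + z)) (α β y t : ℂ) :
    ContDiffAt ℂ n (tauKP α β z σ) (x, y, t) := by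
  have hσ' : ContDiffAt ℂ n (fun q : ℂ × ℂ × ℂ => σ (q.1 + z)) (x, y, t) :=
    ContDiffAt.comp (x, y, t) hσ (by fun_prop)
  exact ContDiffAt.mul (by fun_prop) hσ'

theorem tauKP_add_mul_tauKP_sub (α β z : ℂ) (σ : ℂ → ℂ) (x y t x' y' t' : ℂ) :
    tauKP α β z σ (x + x', y + y', t + t') * tauKP α β z σ (x - x', y - y', t - t') =
      Complex.exp (2 * (α * x * t + β * y ^ 2)) * (Complex.exp (2 * (α * x' * t' + β * y' ^ 2)) *
        (σ (x + z + x') * σ (x + z - x'))) := by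
  have hphase : Complex.exp (α * (x + x') * (t + t') + β * (y + y') ^ 2) *
      Complex.exp (α * (x - x') * (t - t') + β * (y - y') ^ 2) =
      Complex.exp (2 * (α * x * t + β * y ^ 2)) *
        Complex.exp (2 * (α * x' * t' + β * y' ^ 2)) := by
    rw [← Complex.exp_add, ← Complex.exp_add]
    ring_nf
  simp only [tauKP, add_right_comm x x' z, sub_add_eq_add_sub x x' z]
  linear_combination (σ (x + z + x') * σ (x + z - x')) * hphase

theorem Dx4_tauKP (hσ : ContDiffAt ℂ 4 σ (x + z)) (α β y t : ℂ) :
    Dx4 (tauKP α β z σ) (tauKP α β z σ) (x, y, t) =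
      Complex.exp (2 * (α * x * t + β * y ^ 2)) * hirotaDeriv 4 σ σ (x + z) := by
  have hprod (s : ℂ) : tauKP α β z σ (x + s, y, t) * tauKP α β z σ (x - s, y, t) =
      Complex.exp (2 * (α * x * t + β * y ^ 2)) * (σ (x + z + s) * σ (x + z - s)) := by
    simpa using tauKP_add_mul_tauKP_sub α β z σ x y t s 0 0
  have hτ : ContDiffAt ℂ 4 (fun x => tauKP α β z σ (x, y, t)) x := by
    have := contDiffAt_tauKP hσ α β y t
    fun_prop
  rw [Dx4_eq_hirotaDeriv hτ hτ]
  simp only [hirotaDeriv, hprod, iteratedDeriv_const_mul_field]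

theorem DxDt_tauKP (hσ : ContDiffAt ℂ 2 σ (x + z)) (α β y t : ℂ) :
    DxDt (tauKP α β z σ) (tauKP α β z σ) (x, y, t) =
      2 * α * Complex.exp (2 * (α * x * t + β * y ^ 2)) * σ (x + z) ^ 2 := by
  set A := Complex.exp (2 * (α * x * t + β * y ^ 2))
  have hinner (r : ℂ) :
      deriv (fun s => tauKP α β z σ (x + r, y, t + s) * tauKP α β z σ (x - r, y, t - s)) 0 =
        r • (2 * α * A * (σ (x + z + r) * σ (x + z - r))) := by
    have hprod (s : ℂ) : tauKP α β z σ (x + r, y, t + s) * tauKP α β z σ (x - r, y, t - s) =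
        A * (Complex.exp (2 * (α * r * s)) * (σ (x + z + r) * σ (x + z - r))) := by
      simpa using tauKP_add_mul_tauKP_sub α β z σ x y t r 0 s
    have hphase : HasDerivAt (fun s => 2 * (α * r * s)) (2 * (α * r)) 0 := by
      simpa using ((hasDerivAt_id (0 : ℂ)).const_mul (α * r)).const_mul 2
    simp only [hprod]
    rw [((hphase.cexp.mul_const _).const_mul A).deriv, mul_zero, mul_zero, Complex.exp_zero,
      smul_eq_mul]
    ring
  have hσ_diff := (hσ.differentiableAt two_ne_zero).hasDerivAt
  have hτ := contDiffAt_tauKP hσ α β y t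
  have hcont := (hasDerivAt_add_mul_sub hσ_diff hσ_diff).continuousAt.const_mul (2 * α * A)
  rw [DxDt_eq_deriv_deriv hτ hτ, funext hinner, (hasDerivAt_id_smul_zero hcont).deriv, add_zero,
    sub_zero, sq]

theorem Dy2_tauKP (α β z : ℂ) (σ : ℂ → ℂ) (x y t : ℂ) :
    Dy2 (tauKP α β z σ) (tauKP α β z σ) (x, y, t) =
      4 * β * Complex.exp (2 * (α * x * t + β * y ^ 2)) * σ (x + z) ^ 2 := by
  have hprod (s : ℂ) : tauKP α β z σ (x, y + s, t) * tauKP α β z σ (x, y - s, t) =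
      Complex.exp (2 * (α * x * t + β * y ^ 2)) * σ (x + z) ^ 2 *
        Complex.exp (2 * β * s ^ 2) := by
    have h := tauKP_add_mul_tauKP_sub α β z σ x y t 0 s 0
    simp only [add_zero, sub_zero, mul_zero, zero_add] at h
    rw [h, mul_assoc 2 β]
    ring
  have hτ : ContDiffAt ℂ 2 (fun y => tauKP α β z σ (x, y, t)) y :=
    ContDiffAt.mul (by fun_prop) (contDiffAt_const (c := σ (x + z)))
  rw [Dy2_eq_hirotaDeriv hτ hτ]
  simp only [hirotaDeriv, hprod, iteratedDeriv_const_mul_field, iteratedDeriv_two_cexp_mul_sq_zero]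
  ring

theorem kp_tauKP (hσ : ContDiffAt ℂ 4 σ (x + z)) (α β y t : ℂ) :
    Dx4 (tauKP α β z σ) (tauKP α β z σ) (x, y, t)
        - 4 * DxDt (tauKP α β z σ) (tauKP α β z σ) (x, y, t)
        + 3 * Dy2 (tauKP α β z σ) (tauKP α β z σ) (x, y, t)
      = Complex.exp (2 * (α * x * t + β * y ^ 2)) *
          (hirotaDeriv 4 σ σ (x + z) + (12 * β - 8 * α) * σ (x + z) ^ 2) := by
  rw [Dx4_tauKP hσ, DxDt_tauKP (hσ.of_le (by norm_num)), Dy2_tauKP]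
  ring

end TauFunction

/-- equation (1.14) of the paper: if σ satisfies
`2σ''''σ − 8σ'''σ' + 6(σ'')² = g₂σ²` on an open set U, then for
`τ = e^{αxt+βy²}σ(x+z)` one has
`(D_x⁴ − 4D_xD_t + 3D_y²)τ·τ = (g₂ − 8α + 12β) e^{2(αxt+βy²)} σ(x+z)²`
whenever x + z ∈ U; consequently τ satisfies the bilinear KP equation
identically iff `(g₂ + 12β − 8α) σ(x+z)² = 0` for all admissible x. -/
theorem stmt_13 (U : Set ℂ) (hU : IsOpen U)
    (σ : ℂ → ℂ) (hσ : DifferentiableOn ℂ σ U) (g₂ : ℂ)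
    (hσ4 : ∀ w ∈ U,
      2 * deriv (deriv (deriv (deriv σ))) w * σ w
        - 8 * deriv (deriv (deriv σ)) w * deriv σ w
        + 6 * (deriv (deriv σ) w) ^ 2
      = g₂ * (σ w) ^ 2)
    (α β z : ℂ) :
    (∀ x y t : ℂ, x + z ∈ U →
      Dx4 (tauKP α β z σ) (tauKP α β z σ) (x, y, t)
        - 4 * DxDt (tauKP α β z σ) (tauKP α β z σ) (x, y, t)
        + 3 * Dy2 (tauKP α β z σ) (tauKP α β z σ) (x, y, t)
      = (g₂ - 8 * α + 12 * β) * Complex.exp (2 * (α * x * t + β * y ^ 2))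
          * (σ (x + z)) ^ 2) ∧
    ((∀ x y t : ℂ, x + z ∈ U →
        Dx4 (tauKP α β z σ) (tauKP α β z σ) (x, y, t)
          - 4 * DxDt (tauKP α β z σ) (tauKP α β z σ) (x, y, t)
          + 3 * Dy2 (tauKP α β z σ) (tauKP α β z σ) (x, y, t) = 0)
      ↔ (∀ x : ℂ, x + z ∈ U → (g₂ + 12 * β - 8 * α) * (σ (x + z)) ^ 2 = 0)) := by
  have hkp (x y t : ℂ) (hx : x + z ∈ U) :
      Dx4 (tauKP α β z σ) (tauKP α β z σ) (x, y, t)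
        - 4 * DxDt (tauKP α β z σ) (tauKP α β z σ) (x, y, t)
        + 3 * Dy2 (tauKP α β z σ) (tauKP α β z σ) (x, y, t)
      = (g₂ - 8 * α + 12 * β) * Complex.exp (2 * (α * x * t + β * y ^ 2))
          * (σ (x + z)) ^ 2 := by
    have hσx : ContDiffAt ℂ 4 σ (x + z) := (hσ.analyticAt (hU.mem_nhds hx)).contDiffAt
    rw [kp_tauKP hσx, hirotaDeriv_four hσx hσx]
    linear_combination Complex.exp (2 * (α * x * t + β * y ^ 2)) * hσ4 _ hx
  refine ⟨hkp, forall_congr' fun x => ⟨fun h hx => ?_, fun h y t hx => ?_⟩⟩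
  · have h₀ := (hkp x 0 0 hx).symm.trans (h 0 0 hx)
    simp only [mul_zero, zero_pow two_ne_zero, add_zero, Complex.exp_zero, mul_one] at h₀
    linear_combination h₀
  · rw [hkp x y t hx]
    linear_combination Complex.exp (2 * (α * x * t + β * y ^ 2)) * h hx
end
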